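/- Let G be a finite unweighted forest (a graph with no cycles) without isolated vertices. Then for every k = 1,…,n, the k-th min-max eigenvalue c_k of the signless 1-Laplacian Δ₁⁺ satisfies c_k = 1 − h⁺_k, where h⁺_k is the k-way dual Cheeger constant. -/

import Mathlib

open Finset

noncomputable section

/-- The set-valued sign function: `{1}` if `t > 0`, `{-1}` if `t < 0`, `[-1,1]` if `t = 0`. -/
def Sgn (t : ℝ) : Set ℝ := if 0 < t then {1} else if t < 0 then {-1} else Set.Icc (-1) 1

variable {n : ℕ}

/-- The degree `d_i` of vertex `i` (unit edge weights), as a real number. -/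
def degR (G : SimpleGraph (Fin n)) [DecidableRel G.Adj] (i : Fin n) : ℝ := (G.degree i : ℝ)

/-- `vol(V) = Σ_i d_i`. -/
def volV (G : SimpleGraph (Fin n)) [DecidableRel G.Adj] : ℝ := ∑ i, degR G i

/-- `I⁺(x) = Σ_{{i,j} ∈ E} |x_i + x_j|`. -/
def IplusU (G : SimpleGraph (Fin n)) [DecidableRel G.Adj] (x : Fin n → ℝ) : ℝ :=
  (∑ i, ∑ j, if G.Adj i j then |x i + x j| else 0) / 2

/-- `(λ, x)` with `x ≠ 0` is an eigenpair of the signless 1-Laplacian `Δ₁⁺`: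
there are `z_{ij} ∈ Sgn(x_i + x_j)` with `z_{ij} = z_{ji}` and `v_i ∈ Sgn(x_i)` such that
`Σ_{j ∼ i} z_{ij} = λ d_i v_i` for all `i`. -/
def IsEigenSignless (G : SimpleGraph (Fin n)) [DecidableRel G.Adj]
    (lam : ℝ) (x : Fin n → ℝ) : Prop :=
  x ≠ 0 ∧ ∃ z : Fin n → Fin n → ℝ,
    (∀ i j, G.Adj i j → z i j ∈ Sgn (x i + x j)) ∧
    (∀ i j, z i j = z j i) ∧
    ∃ v : Fin n → ℝ, (∀ i, v i ∈ Sgn (x i)) ∧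
      ∀ i, (∑ j, if G.Adj i j then z i j else 0) = lam * degR G i * v i

/-- `D` is the vertex set of a connected component of the subgraph of `G` induced by `P`. -/
def IsCompIn (G : SimpleGraph (Fin n)) (P : Set (Fin n)) (D : Set (Fin n)) : Prop :=
  ∃ v ∈ P, D = {u | Relation.ReflTransGen (fun a b => G.Adj a b ∧ a ∈ P ∧ b ∈ P) v u}

/-- The number `S(x)` of nodal domains of `x`: connected components of the support. -/
def nodalCount (G : SimpleGraph (Fin n)) (x : Fin n → ℝ) : ℕ :=
  Set.ncard {D : Set (Fin n) | IsCompIn G {i | x i ≠ 0} D}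

/-- There is a continuous odd nonvanishing map from `A` into `ℝᵐ ∖ {0}`. -/
def HasOddMap (A : Set (Fin n → ℝ)) (m : ℕ) : Prop :=
  ∃ f : (Fin n → ℝ) → (Fin m → ℝ),
    ContinuousOn f A ∧ (∀ x ∈ A, f (-x) = -f x) ∧ ∀ x ∈ A, f x ≠ 0

/-- `γ(A) ≥ k`, where `γ` is the Krasnoselskii genus: the least `m` admitting a
continuous odd nonvanishing map `A → ℝᵐ ∖ {0}` (with `γ(∅) = 0`, `γ(A) = +∞` if none). -/
def GenusGe (A : Set (Fin n → ℝ)) (k : ℕ) : Prop := ∀ m, HasOddMap A m → k ≤ m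

/-- The `k`-th min-max value of a functional `Φ`:
`inf { sup_{x ∈ A} Φ(x) : A ⊆ ℝⁿ∖{0} symmetric compact, γ(A) ≥ k }`. -/
def minimaxVal (Phi : (Fin n → ℝ) → ℝ) (k : ℕ) : ℝ :=
  sInf {r : ℝ | ∃ A : Set (Fin n → ℝ), IsCompact A ∧ (∀ x ∈ A, -x ∈ A) ∧
    (0 : Fin n → ℝ) ∉ A ∧ GenusGe A k ∧ r = sSup (Phi '' A)}

/-- The Rayleigh quotient `I⁺(x) / Σ_i d_i |x_i|` of the signless 1-Laplacian. -/
def RayleighPlus (G : SimpleGraph (Fin n)) [DecidableRel G.Adj] (x : Fin n → ℝ) : ℝ :=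
  IplusU G x / ∑ i, degR G i * |x i|

/-- The `k`-th min-max eigenvalue `c_k` of the (normalized) signless 1-Laplacian `Δ₁⁺`. -/
def ckSignless (G : SimpleGraph (Fin n)) [DecidableRel G.Adj] (k : ℕ) : ℝ :=
  minimaxVal (RayleighPlus G) k

/-- `|E(A,B)|`: number of edges with one endpoint in `A` and the other in `B`
(each crossing edge counted once when `A` and `B` are disjoint). -/
def cutE (G : SimpleGraph (Fin n)) [DecidableRel G.Adj] (A B : Finset (Fin n)) : ℝ :=
  ∑ i ∈ A, ∑ j ∈ B, if G.Adj i j then (1 : ℝ) else 0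

/-- `vol(A) = Σ_{i ∈ A} d_i`. -/
def volF (G : SimpleGraph (Fin n)) [DecidableRel G.Adj] (A : Finset (Fin n)) : ℝ :=
  ∑ i ∈ A, degR G i

/-- The `k`-way dual Cheeger constant `h⁺_k`: the maximum over `2k` pairwise disjoint
subsets `V₁,…,V_{2k}` with `V_{2i-1} ∪ V_{2i} ≠ ∅` of
`min_i 2|E(V_{2i-1},V_{2i})| / vol(V_{2i-1} ∪ V_{2i})`. -/
def dualCheeger (G : SimpleGraph (Fin n)) [DecidableRel G.Adj] (k : ℕ) : ℝ :=
  sSup {r : ℝ | ∃ P Q : Fin k → Finset (Fin n),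
    (∀ i, Disjoint (P i) (Q i)) ∧
    (∀ i j, i ≠ j → Disjoint (P i ∪ Q i) (P j ∪ Q j)) ∧
    (∀ i, (P i ∪ Q i).Nonempty) ∧
    r = ⨅ i, 2 * cutE G (P i) (Q i) / volF G (P i ∪ Q i)}

namespace BU

variable {m : ℕ}

/-- Points of a simplex of the Kuhn triangulation. -/
def K (τ : Finset (Fin m → ℤ)) : Prop :=
  ∀ p ∈ τ, ∀ q ∈ τ, (p ≤ q ∧ ∀ i, q i ≤ p i + 1) ∨ (q ≤ p ∧ ∀ i, p i ≤ q i + 1)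

def rk (p : Fin m → ℤ) : ℤ := ∑ i, p i

lemma ap {p q : Fin m → ℤ} (h : p ≤ q) (i : Fin m) : p i ≤ q i := h i

lemma rk_mono {p q : Fin m → ℤ} (h : p ≤ q) : rk p ≤ rk q :=
  Finset.sum_le_sum fun i _ => h i

lemma eq_of_le_rk {p q : Fin m → ℤ} (h : p ≤ q) (h2 : rk q ≤ rk p) : p = q := by
  have h3 : rk p = rk q := le_antisymm (rk_mono h) h2
  have := (Finset.sum_eq_sum_iff_of_le (s := Finset.univ) (fun i _ => h i)).1 h3
  funext i
  exact this i (Finset.mem_univ i)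

lemma K.subset {σ τ : Finset (Fin m → ℤ)} (h : K τ) (hs : σ ⊆ τ) : K σ :=
  fun p hp q hq => h p (hs hp) q (hs hq)

lemma K.rk_inj {τ : Finset (Fin m → ℤ)} (h : K τ) {p q} (hp : p ∈ τ) (hq : q ∈ τ)
    (e : rk p = rk q) : p = q := by
  rcases h p hp q hq with h1 | h1
  · exact eq_of_le_rk h1.1 e.ge
  · exact (eq_of_le_rk h1.1 e.le).symm

lemma K.le_of_rk {τ : Finset (Fin m → ℤ)} (h : K τ) {p q} (hp : p ∈ τ) (hq : q ∈ τ)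
    (e : rk p ≤ rk q) : p ≤ q ∧ ∀ i, q i ≤ p i + 1 := by
  rcases h p hp q hq with h1 | h1
  · exact h1
  · have := eq_of_le_rk h1.1 e
    subst this
    exact ⟨le_rfl, fun i => by linarith⟩

lemma K.exists_min {τ : Finset (Fin m → ℤ)} (h : K τ) (hn : τ.Nonempty) :
    ∃ a ∈ τ, ∀ q ∈ τ, a ≤ q ∧ ∀ i, q i ≤ a i + 1 := by
  obtain ⟨a, ha, hm⟩ := Finset.exists_min_image τ rk hn
  exact ⟨a, ha, fun q hq => h.le_of_rk ha hq (hm q hq)⟩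

lemma K.exists_max {τ : Finset (Fin m → ℤ)} (h : K τ) (hn : τ.Nonempty) :
    ∃ a ∈ τ, ∀ q ∈ τ, q ≤ a ∧ ∀ i, a i ≤ q i + 1 := by
  obtain ⟨a, ha, hm⟩ := Finset.exists_max_image τ rk hn
  exact ⟨a, ha, fun q hq => h.le_of_rk hq ha (hm q hq)⟩

lemma rk_diff {p q : Fin m → ℤ} (T : Finset (Fin m)) (h1 : ∀ i ∈ T, q i ≤ p i + 1)
    (h2 : ∀ i, i ∉ T → q i = p i) : rk q ≤ rk p + T.card := by
  have : rk q - rk p = ∑ i ∈ T, (q i - p i) := by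
    unfold rk
    rw [← Finset.sum_sub_distrib]
    symm
    apply Finset.sum_subset (Finset.subset_univ T)
    intro i _ hi
    rw [h2 i hi, sub_self]
  have h3 : ∑ i ∈ T, (q i - p i) ≤ ∑ i ∈ T, (1 : ℤ) :=
    Finset.sum_le_sum fun i hi => by linarith [h1 i hi]
  simp only [Finset.sum_const, nsmul_eq_mul, mul_one] at h3
  linarith

lemma rk_diff_eq {p q : Fin m → ℤ} (T : Finset (Fin m)) (h1 : ∀ i ∈ T, q i = p i + 1)
    (h2 : ∀ i, i ∉ T → q i = p i) : rk q = rk p + T.card := by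
  have : rk q - rk p = ∑ i ∈ T, (q i - p i) := by
    unfold rk
    rw [← Finset.sum_sub_distrib]
    symm
    apply Finset.sum_subset (Finset.subset_univ T)
    intro i _ hi
    rw [h2 i hi, sub_self]
  have h3 : ∑ i ∈ T, (q i - p i) = ∑ i ∈ T, (1 : ℤ) :=
    Finset.sum_congr rfl fun i hi => by linarith [h1 i hi]
  simp only [Finset.sum_const, nsmul_eq_mul, mul_one] at h3
  linarith

lemma K.card_le {τ : Finset (Fin m → ℤ)} (h : K τ) (T : Finset (Fin m))
    (hT : ∀ p ∈ τ, ∀ q ∈ τ, ∀ i, i ∉ T → p i = q i) : τ.card ≤ T.card + 1 := by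
  rcases τ.eq_empty_or_nonempty with rfl | hn
  · simp
  obtain ⟨a, ha, hm⟩ := h.exists_min hn
  have : τ.card ≤ (Finset.Icc (rk a) (rk a + T.card)).card := by
    apply Finset.card_le_card_of_injOn rk
    · intro q hq
      have hq : q ∈ τ := hq
      simp only [Finset.coe_Icc, Set.mem_Icc]
      exact ⟨rk_mono (hm q hq).1, rk_diff T (fun i _ => (hm q hq).2 i) (fun i hi => hT q hq a ha i hi)⟩
    · intro p hp q hq e
      exact h.rk_inj hp hq e
  simp at this
  omega

/-- In a full simplex every rank in the window is attained. -/
lemma K.rk_surj {τ : Finset (Fin m → ℤ)} (h : K τ) (T : Finset (Fin m))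
    (hT : ∀ p ∈ τ, ∀ q ∈ τ, ∀ i, i ∉ T → p i = q i) (hc : τ.card = T.card + 1)
    {a : Fin m → ℤ} (ha : a ∈ τ) (hm : ∀ q ∈ τ, a ≤ q ∧ ∀ i, q i ≤ a i + 1) :
    τ.image rk = Finset.Icc (rk a) (rk a + T.card) := by
  apply Finset.eq_of_subset_of_card_le
  · intro x hx
    obtain ⟨q, hq, rfl⟩ := Finset.mem_image.1 hx
    rw [Finset.mem_Icc]
    exact ⟨rk_mono (hm q hq).1, rk_diff T (fun i _ => (hm q hq).2 i) (fun i hi => hT q hq a ha i hi)⟩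
  · rw [Finset.card_image_of_injOn (fun p hp q hq e => h.rk_inj hp hq e), hc]
    rw [Int.card_Icc]
    omega

/-- `p` extends the simplex `σ` inside the coordinate subspace `S`. -/
def Ext (σ : Finset (Fin m → ℤ)) (S : Finset (Fin m)) (p : Fin m → ℤ) : Prop :=
  p ∉ σ ∧ K (insert p σ) ∧ ∀ q ∈ σ, ∀ i, i ∉ S → p i = q i

lemma K_insert {σ : Finset (Fin m → ℤ)} {p : Fin m → ℤ} (h : K σ)
    (hp : ∀ q ∈ σ, (p ≤ q ∧ ∀ i, q i ≤ p i + 1) ∨ (q ≤ p ∧ ∀ i, p i ≤ q i + 1)) :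
    K (insert p σ) := by
  intro x hx y hy
  rw [Finset.mem_insert] at hx hy
  rcases hx with rfl | hx <;> rcases hy with rfl | hy
  · exact Or.inl ⟨le_rfl, fun i => by linarith⟩
  · exact hp y hy
  · exact (hp x hx).symm
  · exact h x hx y hy

lemma ext_a {σ : Finset (Fin m → ℤ)} {S : Finset (Fin m)} (h : K σ) (hc : σ.card = S.card)
    (hS : ∀ p ∈ σ, ∀ q ∈ σ, ∀ i, i ∉ S → p i = q i) {i : Fin m} (hi : i ∈ S)
    (hconst : ∀ p ∈ σ, ∀ q ∈ σ, p i = q i) :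
    ∃ M ∈ σ, ∃ a ∈ σ, ∀ p, Ext σ S p ↔ (p = M + Pi.single i 1 ∨ p = a - Pi.single i 1) := by
  have hpos : 0 < S.card := Finset.card_pos.2 ⟨i, hi⟩
  have hn : σ.Nonempty := Finset.card_pos.1 (by omega)
  obtain ⟨a, ha, hmin⟩ := h.exists_min hn
  obtain ⟨M, hM, hmax⟩ := h.exists_max hn
  have hT : ∀ p ∈ σ, ∀ q ∈ σ, ∀ j, j ∉ S.erase i → p j = q j := by
    intro p hp q hq j hj
    by_cases hji : j = i
    · subst hji; exact hconst p hp q hq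
    · exact hS p hp q hq j (fun hjS => hj (Finset.mem_erase.2 ⟨hji, hjS⟩))
  have hcT : (S.erase i).card + 1 = S.card := Finset.card_erase_add_one hi
  have hsurj := h.rk_surj (S.erase i) hT (by omega) ha hmin
  have hrkM : rk M = rk a + (S.erase i).card := by
    have : rk a + ((S.erase i).card : ℤ) ∈ σ.image rk := by
      rw [hsurj, Finset.mem_Icc]; constructor <;> omega
    obtain ⟨q, hq, e⟩ := Finset.mem_image.1 this
    have h1 := rk_mono (hmax q hq).1
    have h2 := rk_diff (S.erase i) (fun i _ => (hmin M hM).2 i) (fun i hi => hT M hM a ha i hi)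
    omega
  -- M = a + 1 on S.erase i
  have hMa : ∀ j ∈ S.erase i, M j = a j + 1 := by
    have hle : M ≤ a + (fun j => if j ∈ S.erase i then 1 else 0) := by
      intro j
      by_cases hj : j ∈ S.erase i
      · simp only [Pi.add_apply, hj, if_true]; exact (hmin M hM).2 j
      · simp only [Pi.add_apply, hj, if_false]; exact (hT M hM a ha j hj).le.trans (by simp)
    have := eq_of_le_rk hle (by
      rw [hrkM]; apply le_of_eq
      apply rk_diff_eq
      · intro j hj; simp only [Pi.add_apply, hj, if_true]
      · intro j hj; simp only [Pi.add_apply, hj, if_false, add_zero])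
    intro j hj
    have := congrFun this j
    simpa only [Pi.add_apply, hj, if_true] using this
  refine ⟨M, hM, a, ha, fun p => ⟨?_, ?_⟩⟩
  · rintro ⟨hp, hK, hpS⟩
    have hpin : p ∈ insert p σ := Finset.mem_insert_self _ _
    have hin : ∀ q ∈ σ, q ∈ insert p σ := fun q hq => Finset.mem_insert_of_mem hq
    rcases lt_or_ge (rk p) (rk a) with hlt | hge
    · right
      obtain ⟨h1, h2⟩ := hK.le_of_rk hpin (hin a ha) hlt.le
      obtain ⟨h3, h4⟩ := hK.le_of_rk hpin (hin M hM) (by linarith [rk_mono (hmin M hM).1])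
      have hoff : ∀ j, j ≠ i → p j = a j := by
        intro j hj
        by_cases hjS : j ∈ S
        · have := h4 j; have := hMa j (Finset.mem_erase.2 ⟨hj, hjS⟩); have := ap h1 j; omega
        · exact hpS a ha j hjS
      have hpi : p i = a i - 1 := by
        have := ap h1 i; have := h2 i
        by_contra hne
        have hpi : p i = a i := by omega
        apply hlt.ne
        congr 1
        funext j
        by_cases hj : j = i
        · subst hj; exact hpi
        · exact hoff j hj
      funext j
      by_cases hj : j = i
      · subst hj; simp [hpi]
      · simp [hj, hoff j hj]
    · rcases lt_or_ge (rk M) (rk p) with hlt | hge2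
      · left
        obtain ⟨h1, h2⟩ := hK.le_of_rk (hin M hM) hpin hlt.le
        obtain ⟨h3, h4⟩ := hK.le_of_rk (hin a ha) hpin (by linarith [rk_mono (hmin M hM).1])
        have hoff : ∀ j, j ≠ i → p j = M j := by
          intro j hj
          by_cases hjS : j ∈ S
          · have := h4 j; have := hMa j (Finset.mem_erase.2 ⟨hj, hjS⟩); have := ap h1 j; omega
          · exact hpS M hM j hjS
        have hpi : p i = M i + 1 := by
          have := ap h1 i; have := h2 i
          by_contra hne
          have hpi : p i = M i := by omega
          apply hlt.ne
          congr 1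
          funext j
          by_cases hj : j = i
          · subst hj; exact hpi.symm
          · exact (hoff j hj).symm
        funext j
        by_cases hj : j = i
        · subst hj; simp [hpi]
        · simp [hj, hoff j hj]
      · exfalso
        have : rk p ∈ σ.image rk := by
          rw [hsurj, Finset.mem_Icc]; constructor <;> omega
        obtain ⟨q, hq, e⟩ := Finset.mem_image.1 this
        have := hK.rk_inj (hin q hq) hpin e
        subst this
        exact hp hq
  · rintro (rfl | rfl)
    · refine ⟨?_, ?_, ?_⟩
      · intro hin
        have := hconst _ hin M hM
        simp at this
      · apply K_insert h
        intro q hq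
        right
        constructor
        · intro j
          have := ap (hmax q hq).1 j
          by_cases hj : j = i
          · subst hj; simp; omega
          · simpa [hj] using this
        · intro j
          have := (hmax q hq).2 j
          by_cases hj : j = i
          · subst hj; simp [hconst M hM q hq]
          · simpa [hj] using this
      · intro q hq j hj
        have hji : j ≠ i := fun e => hj (e ▸ hi)
        simpa [hji] using hS M hM q hq j hj
    · refine ⟨?_, ?_, ?_⟩
      · intro hin
        have := hconst _ hin a ha
        simp at this
      · apply K_insert h
        intro q hq
        left
        constructor
        · intro j
          have := ap (hmin q hq).1 j
          by_cases hj : j = i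
          · subst hj; simp; omega
          · simpa [hj] using this
        · intro j
          have := (hmin q hq).2 j
          by_cases hj : j = i
          · subst hj; simp [hconst a ha q hq]
          · simpa [hj] using this
      · intro q hq j hj
        have hji : j ≠ i := fun e => hj (e ▸ hi)
        simpa [hji] using hS a ha q hq j hj

lemma ext_b {σ : Finset (Fin m → ℤ)} {S : Finset (Fin m)} (h : K σ) (hc : σ.card = S.card)
    (hn : σ.Nonempty)
    (hS : ∀ p ∈ σ, ∀ q ∈ σ, ∀ i, i ∉ S → p i = q i)
    (hnc : ∀ i ∈ S, ∃ p ∈ σ, ∃ q ∈ σ, p i ≠ q i) :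
    ∃ a ∈ σ, ∃ b ∈ σ, ∃ p₁ p₂, p₁ ≠ p₂ ∧ (a ≤ p₁ ∧ p₁ ≤ b) ∧ (a ≤ p₂ ∧ p₂ ≤ b) ∧
      ∀ p, Ext σ S p ↔ (p = p₁ ∨ p = p₂) := by
  obtain ⟨a, ha, hmin⟩ := h.exists_min hn
  obtain ⟨M, hM, hmax⟩ := h.exists_max hn
  have hMa : ∀ j ∈ S, M j = a j + 1 := by
    intro j hj
    obtain ⟨p, hp, q, hq, hpq⟩ := hnc j hj
    have := ap (hmin p hp).1 j; have := ap (hmin q hq).1 j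
    have := ap (hmax p hp).1 j; have := ap (hmax q hq).1 j
    have := (hmin M hM).2 j
    omega
  have hrkM : rk M = rk a + S.card := rk_diff_eq S hMa (fun i hi => hS M hM a ha i hi)
  -- the missing rank
  have hsub : σ.image rk ⊆ Finset.Icc (rk a) (rk a + S.card) := by
    intro x hx
    obtain ⟨q, hq, rfl⟩ := Finset.mem_image.1 hx
    rw [Finset.mem_Icc, ← hrkM]
    exact ⟨rk_mono (hmin q hq).1, rk_mono (hmax q hq).1⟩
  have hcardim : (σ.image rk).card = S.card := by
    rw [Finset.card_image_of_injOn (fun p hp q hq e => h.rk_inj hp hq e), hc]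
  have hdiff : (Finset.Icc (rk a) (rk a + S.card) \ σ.image rk).card = 1 := by
    rw [Finset.card_sdiff_of_subset hsub, hcardim, Int.card_Icc]; omega
  obtain ⟨ρ, hρ⟩ := Finset.card_eq_one.1 hdiff
  have hρmem : ∀ x, (rk a ≤ x ∧ x ≤ rk M ∧ x ∉ σ.image rk) ↔ x = ρ := by
    intro x
    rw [← Finset.mem_singleton, ← hρ, Finset.mem_sdiff, Finset.mem_Icc, hrkM]
    tauto
  obtain ⟨hρ1, hρ2, hρ3⟩ := (hρmem ρ).2 rfl
  have hra : rk a ∈ σ.image rk := Finset.mem_image_of_mem _ ha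
  have hrM : rk M ∈ σ.image rk := Finset.mem_image_of_mem _ hM
  have hρa : rk a < ρ := lt_of_le_of_ne hρ1 (fun e => hρ3 (e ▸ hra))
  have hρM : ρ < rk M := lt_of_le_of_ne hρ2 (fun e => hρ3 (e ▸ hrM))
  have hu : ∃ u ∈ σ, rk u = ρ - 1 := by
    by_contra hcon
    have : ρ - 1 = ρ := (hρmem (ρ - 1)).1 ⟨by omega, by omega, fun hh => by
      obtain ⟨q, hq, e⟩ := Finset.mem_image.1 hh
      exact hcon ⟨q, hq, e⟩⟩
    omega
  have hv : ∃ u ∈ σ, rk u = ρ + 1 := by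
    by_contra hcon
    have : ρ + 1 = ρ := (hρmem (ρ + 1)).1 ⟨by omega, by omega, fun hh => by
      obtain ⟨q, hq, e⟩ := Finset.mem_image.1 hh
      exact hcon ⟨q, hq, e⟩⟩
    omega
  obtain ⟨u, hu, hru⟩ := hu
  obtain ⟨v, hv, hrv⟩ := hv
  obtain ⟨huv, huv1⟩ := h.le_of_rk hu hv (by omega)
  -- D
  let D : Finset (Fin m) := Finset.univ.filter (fun j => v j ≠ u j)
  have hDmem : ∀ j, j ∈ D ↔ v j ≠ u j := fun j => by simp [D]
  have hD1 : ∀ j ∈ D, v j = u j + 1 := by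
    intro j hj
    have := (hDmem j).1 hj; have := ap huv j; have := huv1 j; omega
  have hD0 : ∀ j, j ∉ D → v j = u j := by
    intro j hj
    by_contra hne
    exact hj ((hDmem j).2 hne)
  have hDS : D ⊆ S := by
    intro j hj
    by_contra hjS
    exact (hDmem j).1 hj (hS v hv u hu j hjS)
  have hDc : D.card = 2 := by
    have := rk_diff_eq D hD1 hD0; omega
  obtain ⟨i, j, hij, hDij⟩ := Finset.card_eq_two.1 hDc
  have key : ∀ l ∈ D, Ext σ S (u + Pi.single l 1) ∧ u ≤ u + Pi.single l 1 ∧ u + Pi.single l 1 ≤ v := by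
    intro l hl
    have hrk : rk (u + Pi.single l 1) = ρ := by
      have := rk_diff_eq (p := u) (q := u + Pi.single l 1) {l} (by simp) (by
        intro j hj; rw [Finset.mem_singleton] at hj; simp [hj])
      simp only [Finset.card_singleton] at this
      push_cast at this
      omega
    have hup : u ≤ u + Pi.single l 1 := by
      intro j
      by_cases hj : j = l
      · subst hj; simp
      · simp [hj]
    have hpv : u + Pi.single l 1 ≤ v := by
      intro j
      by_cases hj : j = l
      · subst hj; simp [hD1 j hl]
      · simpa [hj] using ap huv j
    refine ⟨⟨?_, ?_, ?_⟩, hup, hpv⟩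
    · intro hin
      exact hρ3 (hrk ▸ Finset.mem_image_of_mem _ hin)
    · apply K_insert h
      intro q hq
      rcases lt_or_ge (rk q) ρ with hlt | hge
      · right
        have hqu := (h.le_of_rk hq hu (by omega)).1
        refine ⟨hqu.trans hup, fun j => ?_⟩
        have h1 := ap hpv j
        have h2 := ap (hmax v hv).1 j
        have h3 := (hmax q hq).2 j
        omega
      · left
        have hne : rk q ≠ ρ := fun e => hρ3 (e ▸ Finset.mem_image_of_mem _ hq)
        have hvq := (h.le_of_rk hv hq (by omega)).1
        refine ⟨hpv.trans hvq, fun j => ?_⟩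
        have h1 := ap hup j
        have h2 := ap (hmin u hu).1 j
        have h3 := (hmin q hq).2 j
        omega
    · intro q hq j hj
      have hjl : j ≠ l := fun e => hj (e ▸ hDS hl)
      simpa [hjl] using hS u hu q hq j hj
  have hiD : i ∈ D := by rw [hDij]; simp
  have hjD : j ∈ D := by rw [hDij]; simp
  refine ⟨u, hu, v, hv, u + Pi.single i 1, u + Pi.single j 1, ?_, (key i hiD).2, (key j hjD).2,
    fun p => ⟨?_, ?_⟩⟩
  · intro e
    have := congrFun e i
    simp [hij] at this
  · rintro ⟨hp, hK, hpS⟩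
    have hpin : p ∈ insert p σ := Finset.mem_insert_self _ _
    have hin : ∀ q ∈ σ, q ∈ insert p σ := fun q hq => Finset.mem_insert_of_mem hq
    have hap : rk a ≤ rk p := by
      by_contra hlt
      push Not at hlt
      have h1 := (hK.le_of_rk hpin (hin M hM) (by omega)).2
      apply not_le.2 hlt
      apply rk_mono
      intro j
      by_cases hj : j ∈ S
      · have := h1 j; have := hMa j hj; show a j ≤ p j; omega
      · exact (hpS a ha j hj).ge
    have hpM : rk p ≤ rk M := by
      by_contra hlt
      push Not at hlt
      have h1 := (hK.le_of_rk (hin a ha) hpin (by omega)).2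
      apply not_le.2 hlt
      apply rk_mono
      intro j
      by_cases hj : j ∈ S
      · have := h1 j; have := hMa j hj; show p j ≤ M j; omega
      · exact (hpS M hM j hj).le
    have hrp : rk p = ρ := (hρmem _).1 ⟨hap, hpM, fun hh => by
      obtain ⟨q, hq, e⟩ := Finset.mem_image.1 hh
      have := hK.rk_inj (hin q hq) hpin e
      subst this
      exact hp hq⟩
    obtain ⟨hup, hup1⟩ := hK.le_of_rk (hin u hu) hpin (by omega)
    obtain ⟨hpv, hpv1⟩ := hK.le_of_rk hpin (hin v hv) (by omega)
    have : ∃ l, p l ≠ u l := by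
      by_contra hcon
      push Not at hcon
      have : p = u := funext hcon
      subst this
      exact hp hu
    obtain ⟨l, hl⟩ := this
    have hlD : l ∈ D := by
      rw [hDmem]
      have := ap hup l; have := ap hpv l; omega
    have hpl : p = u + Pi.single l 1 := by
      symm
      apply eq_of_le_rk
      · intro j
        by_cases hj : j = l
        · subst hj; have := ap hup j; simp; omega
        · simpa [hj] using ap hup j
      · have := rk_diff_eq (p := u) (q := u + Pi.single l 1) {l} (by simp) (by
          intro j hj; rw [Finset.mem_singleton] at hj; simp [hj])
        simp only [Finset.card_singleton] at this
        push_cast at this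
        omega
    rw [hDij] at hlD
    simp only [Finset.mem_insert, Finset.mem_singleton] at hlD
    rcases hlD with rfl | rfl
    · exact Or.inl hpl
    · exact Or.inr hpl
  · rintro (rfl | rfl)
    · exact (key i hiD).1
    · exact (key j hjD).1

def inC (N : ℤ) (s : Finset (Fin m × Bool)) (p : Fin m → ℤ) : Prop :=
  ∀ i, -N ≤ p i ∧ p i ≤ N ∧ (0 < p i → (i, true) ∈ s) ∧ (p i < 0 → (i, false) ∈ s)

def cons (s : Finset (Fin m × Bool)) : Prop := ∀ i, ¬((i, true) ∈ s ∧ (i, false) ∈ s)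

lemma inC.mono {N : ℤ} {s t : Finset (Fin m × Bool)} {p : Fin m → ℤ} (h : inC N s p)
    (hst : s ⊆ t) : inC N t p := fun i =>
  ⟨(h i).1, (h i).2.1, fun hp => hst ((h i).2.2.1 hp), fun hp => hst ((h i).2.2.2 hp)⟩

lemma cons.eq {s : Finset (Fin m × Bool)} (h : cons s) {i : Fin m} {b c : Bool}
    (hb : (i, b) ∈ s) (hc : (i, c) ∈ s) : b = c := by
  cases b <;> cases c
  · rfl
  · exact absurd ⟨hc, hb⟩ (h i)
  · exact absurd ⟨hb, hc⟩ (h i)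
  · rfl

lemma cons.mono {s t : Finset (Fin m × Bool)} (h : cons t) (hst : s ⊆ t) : cons s :=
  fun i hi => h i ⟨hst hi.1, hst hi.2⟩

lemma cons.card {s : Finset (Fin m × Bool)} (h : cons s) :
    (s.image Prod.fst).card = s.card := by
  apply Finset.card_image_of_injOn
  rintro ⟨i, b⟩ hi ⟨j, c⟩ hj e
  simp only at e
  subst e
  rw [h.eq hi hj]

lemma inC.zero {N : ℤ} {s : Finset (Fin m × Bool)} {p : Fin m → ℤ} (h : inC N s p)
    {i : Fin m} (hi : i ∉ s.image Prod.fst) : p i = 0 := by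
  rcases lt_trichotomy (p i) 0 with h1 | h1 | h1
  · exact absurd (Finset.mem_image.2 ⟨_, (h i).2.2.2 h1, rfl⟩) hi
  · exact h1
  · exact absurd (Finset.mem_image.2 ⟨_, (h i).2.2.1 h1, rfl⟩) hi

def lo (N : ℤ) (b : Bool) : ℤ := if b then 0 else -N
def hi (N : ℤ) (b : Bool) : ℤ := if b then N else 0
def outv (N : ℤ) (b : Bool) : ℤ := if b then N else -N

lemma inC_bounds {N : ℤ} {s : Finset (Fin m × Bool)} (hs : cons s) {p : Fin m → ℤ}
    (h : inC N s p) {i : Fin m} {b : Bool} (hb : (i, b) ∈ s) : lo N b ≤ p i ∧ p i ≤ hi N b := by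
  obtain ⟨h1, h2, h3, h4⟩ := h i
  cases b
  · refine ⟨h1, ?_⟩
    by_contra hc
    have hc : 0 < p i := by simpa [hi] using hc
    exact hs i ⟨h3 hc, hb⟩
  · refine ⟨?_, h2⟩
    by_contra hc
    have hc : p i < 0 := by simpa [lo] using hc
    exact hs i ⟨hb, h4 hc⟩

lemma inC_update {N : ℤ} (hN : 1 ≤ N) {s : Finset (Fin m × Bool)} (hs : cons s)
    {p q : Fin m → ℤ}
    (h : inC N s q) {i : Fin m} {b : Bool} (hb : (i, b) ∈ s) (hpq : ∀ j, j ≠ i → p j = q j) :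
    inC N s p ↔ (lo N b ≤ p i ∧ p i ≤ hi N b) := by
  refine ⟨fun h => inC_bounds hs h hb, fun h' j => ?_⟩
  by_cases hj : j = i
  · subst hj
    cases b
    · simp only [lo, hi, Bool.false_eq_true, if_false] at h'
      exact ⟨h'.1, by omega, fun _ => by omega, fun _ => hb⟩
    · simp only [lo, hi, if_true] at h'
      exact ⟨by omega, h'.2, fun _ => hb, fun _ => by omega⟩
  · rw [hpq j hj]
    exact h j

lemma inC_between {N : ℤ} {s : Finset (Fin m × Bool)} {a b p : Fin m → ℤ}
    (ha : inC N s a) (hb : inC N s b) (h1 : a ≤ p) (h2 : p ≤ b) : inC N s p := by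
  intro i
  have h1 := ap h1 i
  have h2 := ap h2 i
  obtain ⟨a1, a2, a3, a4⟩ := ha i
  obtain ⟨b1, b2, b3, b4⟩ := hb i
  exact ⟨by omega, by omega, fun _ => b3 (by omega), fun _ => a4 (by omega)⟩

def box (m : ℕ) (N : ℤ) : Finset (Fin m → ℤ) := Fintype.piFinset fun _ => Finset.Icc (-N) N

lemma inC.mem_box {N : ℤ} {s : Finset (Fin m × Bool)} {p : Fin m → ℤ} (h : inC N s p) :
    p ∈ box m N := by
  rw [box, Fintype.mem_piFinset]
  intro i
  rw [Finset.mem_Icc]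
  exact ⟨(h i).1, (h i).2.1⟩

open Classical in
def Fac (N : ℤ) (lab : (Fin m → ℤ) → Fin m × Bool) (s : Finset (Fin m × Bool)) :
    Finset (Finset (Fin m → ℤ)) :=
  (box m N).powerset.filter fun σ =>
    K σ ∧ (∀ p ∈ σ, inC N s p) ∧ σ.card = s.card ∧ σ.image lab = s

open Classical in
def Simp (N : ℤ) (s : Finset (Fin m × Bool)) : Finset (Finset (Fin m → ℤ)) :=
  (box m N).powerset.filter fun τ => K τ ∧ (∀ p ∈ τ, inC N s p) ∧ τ.card = s.card + 1

open Classical in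
def Good (N : ℤ) (lab : (Fin m → ℤ) → Fin m × Bool) (s : Finset (Fin m × Bool)) :
    Finset (Finset (Fin m → ℤ)) :=
  (Simp N s).filter fun τ => s ⊆ τ.image lab ∧ (τ.image lab).card = s.card + 1

open Classical in
lemma mem_Fac {N : ℤ} {lab : (Fin m → ℤ) → Fin m × Bool} {s : Finset (Fin m × Bool)}
    {σ : Finset (Fin m → ℤ)} : σ ∈ Fac N lab s ↔
    K σ ∧ (∀ p ∈ σ, inC N s p) ∧ σ.card = s.card ∧ σ.image lab = s := by
  unfold Fac
  rw [Finset.mem_filter, Finset.mem_powerset, and_iff_right_iff_imp]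
  intro h p hp
  exact (h.2.1 p hp).mem_box

open Classical in
lemma mem_Simp {N : ℤ} {s : Finset (Fin m × Bool)}
    {σ : Finset (Fin m → ℤ)} : σ ∈ Simp N s ↔
    K σ ∧ (∀ p ∈ σ, inC N s p) ∧ σ.card = s.card + 1 := by
  unfold Simp
  rw [Finset.mem_filter, Finset.mem_powerset, and_iff_right_iff_imp]
  intro h p hp
  exact (h.2.1 p hp).mem_box

open Classical in
lemma mem_Good {N : ℤ} {lab : (Fin m → ℤ) → Fin m × Bool} {s : Finset (Fin m × Bool)}
    {σ : Finset (Fin m → ℤ)} : σ ∈ Good N lab s ↔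
    (K σ ∧ (∀ p ∈ σ, inC N s p) ∧ σ.card = s.card + 1) ∧
      s ⊆ σ.image lab ∧ (σ.image lab).card = s.card + 1 := by
  unfold Good
  rw [Finset.mem_filter, mem_Simp]

def Zb (s : Finset (Fin m × Bool)) (σ : Finset (Fin m → ℤ)) : Prop :=
  ∃ i b, (i, b) ∈ s ∧ ∀ p ∈ σ, p i = 0

def Wb (N : ℤ) (s : Finset (Fin m × Bool)) (σ : Finset (Fin m → ℤ)) : Prop :=
  ∃ i b, (i, b) ∈ s ∧ ∀ p ∈ σ, p i = outv N b

open Classical in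
lemma count_ext {N : ℤ} (hN : 1 ≤ N) {s : Finset (Fin m × Bool)} (hs : cons s)
    (hne : s.Nonempty) {σ : Finset (Fin m → ℤ)} (hK : K σ) (hC : ∀ p ∈ σ, inC N s p)
    (hc : σ.card = s.card) :
    (((box m N).filter fun p => Ext σ (s.image Prod.fst) p ∧ inC N s p).card : ZMod 2) =
      if Zb s σ ∨ Wb N s σ then 1 else 0 := by
  have hn : σ.Nonempty := Finset.card_pos.1 (by rw [hc]; exact hne.card_pos)
  have hcS : σ.card = (s.image Prod.fst).card := by rw [hs.card, hc]
  have hS : ∀ p ∈ σ, ∀ q ∈ σ, ∀ i, i ∉ s.image Prod.fst → p i = q i := by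
    intro p hp q hq i hi
    rw [(hC p hp).zero hi, (hC q hq).zero hi]
  -- analysis in the constant case
  have hA : ∀ i b c, (i, b) ∈ s → (∀ p ∈ σ, p i = c) → ∃ p₁ p₂ : Fin m → ℤ, p₁ ≠ p₂ ∧
      (inC N s p₁ ↔ c + 1 ≤ hi N b) ∧ (inC N s p₂ ↔ lo N b ≤ c - 1) ∧
      ∀ p, Ext σ (s.image Prod.fst) p ↔ (p = p₁ ∨ p = p₂) := by
    intro i b c hib hconst
    have hiS : i ∈ s.image Prod.fst := Finset.mem_image.2 ⟨_, hib, rfl⟩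
    obtain ⟨M, hM, a, ha, hE⟩ := ext_a hK hcS hS hiS
      (fun p hp q hq => by rw [hconst p hp, hconst q hq])
    have hb := inC_bounds hs (hC M hM) hib
    rw [hconst M hM] at hb
    refine ⟨_, _, ?_, ?_, ?_, hE⟩
    · intro e
      have := congrFun e i
      simp [hconst M hM, hconst a ha] at this
      omega
    · rw [inC_update hN hs (hC M hM) hib (by intro j hj; simp [hj])]
      simp [hconst M hM]
      omega
    · rw [inC_update hN hs (hC a ha) hib (by intro j hj; simp [hj])]
      simp [hconst a ha]
      omega
  have htwo : ∀ p₁ p₂ : Fin m → ℤ, p₁ ≠ p₂ → inC N s p₁ → inC N s p₂ →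
      (∀ p, Ext σ (s.image Prod.fst) p ↔ (p = p₁ ∨ p = p₂)) →
      (((box m N).filter fun p => Ext σ (s.image Prod.fst) p ∧ inC N s p).card : ZMod 2) = 0 := by
    intro p₁ p₂ hne h1 h2 hE
    have : ((box m N).filter fun p => Ext σ (s.image Prod.fst) p ∧ inC N s p) = {p₁, p₂} := by
      ext p
      simp only [Finset.mem_filter, hE, Finset.mem_insert, Finset.mem_singleton]
      constructor
      · tauto
      · rintro (rfl | rfl)
        · exact ⟨h1.mem_box, Or.inl rfl, h1⟩
        · exact ⟨h2.mem_box, Or.inr rfl, h2⟩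
    rw [this, Finset.card_pair hne]
    rfl
  split_ifs with hbd
  · have : ∃ i b c, (i, b) ∈ s ∧ (∀ p ∈ σ, p i = c) ∧ (c = lo N b ∨ c = hi N b) := by
      rcases hbd with ⟨i, b, hib, hz⟩ | ⟨i, b, hib, hz⟩
      · refine ⟨i, b, 0, hib, hz, ?_⟩
        cases b <;> simp [lo, hi]
      · refine ⟨i, b, _, hib, hz, ?_⟩
        cases b <;> simp [lo, hi, outv]
    obtain ⟨i, b, c, hib, hz, hcb⟩ := this
    obtain ⟨p₁, p₂, hne, h1, h2, hE⟩ := hA i b c hib hz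
    have hlh : lo N b + 1 ≤ hi N b := by cases b <;> simp [lo, hi] <;> omega
    rcases hcb with rfl | rfl
    · have : ((box m N).filter fun p => Ext σ (s.image Prod.fst) p ∧ inC N s p) = {p₁} := by
        ext p
        simp only [Finset.mem_filter, hE, Finset.mem_singleton]
        constructor
        · rintro ⟨_, rfl | rfl, h3⟩
          · rfl
          · have := h2.1 h3; omega
        · rintro rfl
          have h3 := h1.2 hlh
          exact ⟨h3.mem_box, Or.inl rfl, h3⟩
      rw [this]; simp
    · have : ((box m N).filter fun p => Ext σ (s.image Prod.fst) p ∧ inC N s p) = {p₂} := by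
        ext p
        simp only [Finset.mem_filter, hE, Finset.mem_singleton]
        constructor
        · rintro ⟨_, rfl | rfl, h3⟩
          · have := h1.1 h3; omega
          · rfl
        · rintro rfl
          have h3 := h2.2 (by omega)
          exact ⟨h3.mem_box, Or.inr rfl, h3⟩
      rw [this]; simp
  · by_cases hco : ∃ i ∈ s.image Prod.fst, ∀ p ∈ σ, ∀ q ∈ σ, p i = q i
    · obtain ⟨i, hiS, hco⟩ := hco
      obtain ⟨⟨i', b⟩, hib, rfl⟩ := Finset.mem_image.1 hiS
      simp only at hco
      obtain ⟨q, hq⟩ := hn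
      have hz : ∀ p ∈ σ, p i' = q i' := fun p hp => hco p hp q hq
      obtain ⟨p₁, p₂, hne, h1, h2, hE⟩ := hA i' b (q i') hib hz
      have hb := inC_bounds hs (hC q hq) hib
      have n1 : q i' ≠ 0 := fun e => hbd (Or.inl ⟨i', b, hib, fun p hp => (hz p hp).trans e⟩)
      have n2 : q i' ≠ outv N b :=
        fun e => hbd (Or.inr ⟨i', b, hib, fun p hp => (hz p hp).trans e⟩)
      apply htwo p₁ p₂ hne _ _ hE
      · rw [h1]; cases b <;> simp [lo, hi, outv] at * <;> omega
      · rw [h2]; cases b <;> simp [lo, hi, outv] at * <;> omega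
    · push Not at hco
      obtain ⟨a, ha, b, hb, p₁, p₂, hne, h1, h2, hE⟩ := ext_b hK hcS hn hS hco
      exact htwo p₁ p₂ hne (inC_between (hC a ha) (hC b hb) h1.1 h1.2)
        (inC_between (hC a ha) (hC b hb) h2.1 h2.2) hE

open Classical in
lemma count_above {N : ℤ} (hN : 1 ≤ N) {s : Finset (Fin m × Bool)} (hs : cons s)
    (hne : s.Nonempty) {σ : Finset (Fin m → ℤ)} (hK : K σ) (hC : ∀ p ∈ σ, inC N s p)
    (hc : σ.card = s.card) :
    (((Simp N s).filter fun τ => σ ⊆ τ).card : ZMod 2) =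
      if Zb s σ ∨ Wb N s σ then 1 else 0 := by
  rw [← count_ext hN hs hne hK hC hc]
  congr 1
  symm
  have hn : σ.Nonempty := Finset.card_pos.1 (by rw [hc]; exact hne.card_pos)
  apply Finset.card_bij (fun p _ => insert p σ)
  · intro p hp
    obtain ⟨_, ⟨h1, h2, h3⟩, h4⟩ := Finset.mem_filter.1 hp
    rw [Finset.mem_filter, mem_Simp]
    refine ⟨⟨h2, ?_, ?_⟩, Finset.subset_insert _ _⟩
    · intro q hq
      rcases Finset.mem_insert.1 hq with rfl | hq
      · exact h4
      · exact hC q hq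
    · rw [Finset.card_insert_of_notMem h1, hc]
  · intro p hp q hq e
    have h1 := (Finset.mem_filter.1 hp).2.1.1
    have : p ∈ insert q σ := e ▸ Finset.mem_insert_self p σ
    rcases Finset.mem_insert.1 this with h | h
    · exact h
    · exact absurd h h1
  · intro τ hτ
    rw [Finset.mem_filter, mem_Simp] at hτ
    obtain ⟨⟨h1, h2, h3⟩, h4⟩ := hτ
    have : (τ \ σ).card = 1 := by rw [Finset.card_sdiff_of_subset h4]; omega
    obtain ⟨p, hp⟩ := Finset.card_eq_one.1 this
    have hpm : p ∈ τ \ σ := by rw [hp]; simp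
    have hins : insert p σ = τ := by
      rw [Finset.insert_eq, ← hp, Finset.sdiff_union_of_subset h4]
    obtain ⟨hpτ, hpσ⟩ := Finset.mem_sdiff.1 hpm
    refine ⟨p, ?_, hins⟩
    rw [Finset.mem_filter]
    refine ⟨(h2 p hpτ).mem_box, ⟨hpσ, hins ▸ h1, ?_⟩, h2 p hpτ⟩
    intro q hq i hi
    rw [(h2 p hpτ).zero hi, (hC q hq).zero hi]

open Classical in
lemma count_below {N : ℤ} {lab : (Fin m → ℤ) → Fin m × Bool} {s : Finset (Fin m × Bool)}
    {τ : Finset (Fin m → ℤ)} (hτ : τ ∈ Simp N s) :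
    (((Fac N lab s).filter fun σ => σ ⊆ τ).card : ZMod 2) = if τ ∈ Good N lab s then 1 else 0 := by
  obtain ⟨hK, hC, hc⟩ := mem_Simp.1 hτ
  have e1 : ((Fac N lab s).filter fun σ => σ ⊆ τ).card =
      (τ.filter fun p => (τ.erase p).image lab = s).card := by
    symm
    apply Finset.card_bij (fun p _ => τ.erase p)
    · intro p hp
      obtain ⟨hp, h1⟩ := Finset.mem_filter.1 hp
      rw [Finset.mem_filter, mem_Fac]
      refine ⟨⟨hK.subset (Finset.erase_subset _ _), fun q hq => hC q (Finset.mem_of_mem_erase hq), ?_, h1⟩,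
        Finset.erase_subset _ _⟩
      rw [Finset.card_erase_of_mem hp, hc]; simp
    · intro p hp q hq e
      have hp := (Finset.mem_filter.1 hp).1
      by_contra hne
      have : p ∈ τ.erase q := Finset.mem_erase.2 ⟨hne, hp⟩
      rw [← e] at this
      exact Finset.notMem_erase p τ this
    · intro σ hσ
      rw [Finset.mem_filter, mem_Fac] at hσ
      obtain ⟨⟨_, _, h3, h4⟩, h5⟩ := hσ
      have : (τ \ σ).card = 1 := by rw [Finset.card_sdiff_of_subset h5]; omega
      obtain ⟨p, hp⟩ := Finset.card_eq_one.1 this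
      have hpm : p ∈ τ \ σ := by rw [hp]; simp
      have he : τ.erase p = σ := by
        rw [Finset.erase_eq, ← hp, Finset.sdiff_sdiff_eq_self h5]
      exact ⟨p, Finset.mem_filter.2 ⟨(Finset.mem_sdiff.1 hpm).1, by rw [he, h4]⟩, he⟩
  rw [e1]
  split_ifs with hg
  · obtain ⟨_, h1, h2⟩ := mem_Good.1 hg
    have hinj : Set.InjOn lab τ := Finset.card_image_iff.1 (by rw [h2, hc])
    have : (τ.image lab \ s).card = 1 := by rw [Finset.card_sdiff_of_subset h1]; omega
    obtain ⟨l, hl⟩ := Finset.card_eq_one.1 this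
    have hlm : l ∈ τ.image lab \ s := by rw [hl]; simp
    obtain ⟨hl1, hl2⟩ := Finset.mem_sdiff.1 hlm
    obtain ⟨p, hp, rfl⟩ := Finset.mem_image.1 hl1
    have : (τ.filter fun p => (τ.erase p).image lab = s) = {p} := by
      ext x
      rw [Finset.mem_filter, Finset.mem_singleton]
      constructor
      · rintro ⟨hx, he⟩
        by_contra hne
        apply hl2
        rw [← he]
        exact Finset.mem_image_of_mem _ (Finset.mem_erase.2 ⟨fun e => hne e.symm, hp⟩)
      · rintro rfl
        refine ⟨hp, ?_⟩
        apply Finset.Subset.antisymm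
        · intro y hy
          obtain ⟨q, hq, rfl⟩ := Finset.mem_image.1 hy
          obtain ⟨hq1, hq2⟩ := Finset.mem_erase.1 hq
          by_contra hy
          have : lab q ∈ τ.image lab \ s :=
            Finset.mem_sdiff.2 ⟨Finset.mem_image_of_mem _ hq2, hy⟩
          rw [hl, Finset.mem_singleton] at this
          exact hq1 (hinj hq2 hp this)
        · intro y hy
          obtain ⟨q, hq, rfl⟩ := Finset.mem_image.1 (h1 hy)
          refine Finset.mem_image_of_mem _ (Finset.mem_erase.2 ⟨?_, hq⟩)
          rintro rfl
          exact hl2 hy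
    rw [this]; simp
  · rcases (τ.filter fun p => (τ.erase p).image lab = s).eq_empty_or_nonempty with he | ⟨p, hp⟩
    · rw [he]; simp
    obtain ⟨hp, hps⟩ := Finset.mem_filter.1 hp
    have him : τ.image lab = insert (lab p) s := by
      rw [← hps, ← Finset.image_insert, Finset.insert_erase hp]
    have hlp : lab p ∈ s := by
      by_contra hlp
      exact hg (mem_Good.2 ⟨⟨hK, hC, hc⟩, by rw [him]; exact Finset.subset_insert _ _,
        by rw [him, Finset.card_insert_of_notMem hlp]⟩)
    have hinj : Set.InjOn lab (τ.erase p) := Finset.card_image_iff.1 (by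
      rw [hps, Finset.card_erase_of_mem hp, hc]; simp)
    have hlp' := hlp
    rw [← hps] at hlp'
    obtain ⟨q, hq, hqp⟩ := Finset.mem_image.1 hlp'
    obtain ⟨hq1, hq2⟩ := Finset.mem_erase.1 hq
    have : (τ.filter fun p => (τ.erase p).image lab = s) = {p, q} := by
      ext x
      rw [Finset.mem_filter, Finset.mem_insert, Finset.mem_singleton]
      constructor
      · rintro ⟨hx, he⟩
        by_contra hne
        push Not at hne
        have hx' : x ∈ τ.erase p := Finset.mem_erase.2 ⟨hne.1, hx⟩
        have : lab x ∈ s := by rw [← hps]; exact Finset.mem_image_of_mem _ hx'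
        rw [← he] at this
        obtain ⟨y, hy, hyx⟩ := Finset.mem_image.1 this
        obtain ⟨hy1, hy2⟩ := Finset.mem_erase.1 hy
        by_cases hyp : y = p
        · subst hyp
          exact hne.2 (hinj hx' hq (by rw [hqp, hyx]))
        · exact hy1 (hinj (Finset.mem_coe.2 (Finset.mem_erase.2 ⟨hyp, hy2⟩)) hx' hyx)
      · rintro (rfl | rfl)
        · exact ⟨hp, hps⟩
        · refine ⟨hq2, ?_⟩
          apply Finset.Subset.antisymm
          · intro y hy
            obtain ⟨z, hz, rfl⟩ := Finset.mem_image.1 hy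
            have : lab z ∈ τ.image lab := Finset.mem_image_of_mem _ (Finset.mem_of_mem_erase hz)
            rw [him, Finset.insert_eq_of_mem hlp] at this
            exact this
          · intro y hy
            by_cases hyp : y = lab p
            · subst hyp
              exact Finset.mem_image_of_mem _ (Finset.mem_erase.2 ⟨fun e => hq1 e.symm, hp⟩)
            · rw [← hps] at hy
              obtain ⟨z, hz, rfl⟩ := Finset.mem_image.1 hy
              refine Finset.mem_image_of_mem _ (Finset.mem_erase.2 ⟨?_, Finset.mem_of_mem_erase hz⟩)
              rintro rfl
              exact hyp hqp
    rw [this, Finset.card_pair (fun e => hq1 e.symm)]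
    rfl

open Classical in
lemma count_s {N : ℤ} (hN : 1 ≤ N) (lab : (Fin m → ℤ) → Fin m × Bool)
    {s : Finset (Fin m × Bool)} (hs : cons s) (hne : s.Nonempty) :
    ((Good N lab s).card : ZMod 2) =
      ((Fac N lab s).filter fun σ => Zb s σ ∨ Wb N s σ).card := by
  have h := Finset.sum_card_bipartiteAbove_eq_sum_card_bipartiteBelow
    (s := Fac N lab s) (t := Simp N s) (fun σ τ => σ ⊆ τ)
  have h2 := congrArg (Nat.cast : ℕ → ZMod 2) h
  push_cast at h2
  unfold Finset.bipartiteAbove Finset.bipartiteBelow at h2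
  rw [Finset.sum_congr rfl (fun σ hσ => count_above hN hs hne (mem_Fac.1 hσ).1 (mem_Fac.1 hσ).2.1
    (mem_Fac.1 hσ).2.2.1), Finset.sum_congr rfl (fun τ hτ => count_below hτ)] at h2
  rw [Finset.card_filter]
  push_cast
  rw [h2, ← Finset.sum_filter, Finset.sum_const, nsmul_eq_mul, mul_one]
  congr 2
  ext τ
  rw [Finset.mem_filter, Good, Finset.mem_filter]
  tauto

open Classical in
def CS (m k : ℕ) : Finset (Finset (Fin m × Bool)) :=
  Finset.univ.filter fun s => cons s ∧ s.card = k

lemma mem_CS {k : ℕ} {s : Finset (Fin m × Bool)} : s ∈ CS m k ↔ cons s ∧ s.card = k := by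
  simp [CS]

def flip (l : Fin m × Bool) : Fin m × Bool := (l.1, !l.2)

lemma flip_flip (l : Fin m × Bool) : flip (flip l) = l := by
  simp [flip]

lemma flip_inj : Function.Injective (flip (m := m)) := fun a b h => by
  rw [← flip_flip a, h, flip_flip]

lemma mem_image_flip {s : Finset (Fin m × Bool)} {i : Fin m} {b : Bool} :
    (i, b) ∈ s.image flip ↔ (i, !b) ∈ s := by
  constructor
  · intro h
    obtain ⟨⟨j, c⟩, hl, e⟩ := Finset.mem_image.1 h
    simp only [flip, Prod.mk.injEq] at e
    obtain ⟨rfl, rfl⟩ := e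
    simpa using hl
  · intro h
    exact Finset.mem_image.2 ⟨_, h, by simp [flip]⟩

lemma image_flip_flip (s : Finset (Fin m × Bool)) : (s.image flip).image flip = s := by
  rw [Finset.image_image, show (flip ∘ flip : Fin m × Bool → _) = id from funext flip_flip,
    Finset.image_id]

lemma image_neg_neg (σ : Finset (Fin m → ℤ)) :
    (σ.image (fun p => -p)).image (fun p => -p) = σ := by
  rw [Finset.image_image, show ((fun p : Fin m → ℤ => -p) ∘ fun p => -p) = id from
    funext fun p => neg_neg p, Finset.image_id]

lemma K.neg {σ : Finset (Fin m → ℤ)} (h : K σ) : K (σ.image fun p => -p) := by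
  intro p hp q hq
  obtain ⟨p', hp', rfl⟩ := Finset.mem_image.1 hp
  obtain ⟨q', hq', rfl⟩ := Finset.mem_image.1 hq
  rcases h p' hp' q' hq' with h1 | h1
  · right
    refine ⟨neg_le_neg h1.1, fun i => ?_⟩
    have := h1.2 i
    simp only [Pi.neg_apply]
    omega
  · left
    refine ⟨neg_le_neg h1.1, fun i => ?_⟩
    have := h1.2 i
    simp only [Pi.neg_apply]
    omega

lemma inC.neg {N : ℤ} {s : Finset (Fin m × Bool)} {p : Fin m → ℤ} (h : inC N s p) :
    inC N (s.image flip) (-p) := by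
  intro i
  obtain ⟨h1, h2, h3, h4⟩ := h i
  simp only [Pi.neg_apply, mem_image_flip]
  refine ⟨by omega, by omega, fun hh => ?_, fun hh => ?_⟩
  · exact h4 (by omega)
  · exact h3 (by omega)

section
variable {N : ℤ} (lab : (Fin m → ℤ) → Fin m × Bool)

lemma not_Z_W (hN : 1 ≤ N) {s : Finset (Fin m × Bool)} (hs : cons s) {σ : Finset (Fin m → ℤ)}
    (hne : s.Nonempty) (hσ : σ ∈ Fac N lab s) : ¬ (Zb s σ ∧ Wb N s σ) := by
  rintro ⟨⟨i, b, hib, hz⟩, j, c, hjc, hw⟩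
  obtain ⟨hK, hC, hc, _⟩ := mem_Fac.1 hσ
  have hn : σ.Nonempty := Finset.card_pos.1 (by rw [hc]; exact hne.card_pos)
  obtain ⟨q, hq⟩ := hn
  have hij : i ≠ j := by
    rintro rfl
    have h1 := hz q hq
    have h2 := hw q hq
    rw [h1] at h2
    cases c <;> simp [outv] at h2 <;> omega
  have := hK.card_le (((s.image Prod.fst).erase i).erase j) (by
    intro p hp q hq l hl
    by_cases hlj : l = j
    · subst hlj; rw [hw p hp, hw q hq]
    by_cases hli : l = i
    · subst hli; rw [hz p hp, hz q hq]
    have : l ∉ s.image Prod.fst := fun h =>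
      hl (Finset.mem_erase.2 ⟨hlj, Finset.mem_erase.2 ⟨hli, h⟩⟩)
    rw [(hC p hp).zero this, (hC q hq).zero this])
  have hi1 : i ∈ s.image Prod.fst := Finset.mem_image.2 ⟨_, hib, rfl⟩
  have hj1 : j ∈ s.image Prod.fst := Finset.mem_image.2 ⟨_, hjc, rfl⟩
  have hj2 : j ∈ (s.image Prod.fst).erase i := Finset.mem_erase.2 ⟨fun e => hij e.symm, hj1⟩
  have e1 := Finset.card_erase_add_one hj2
  have e2 := Finset.card_erase_add_one hi1
  rw [hs.card] at e2
  omega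

open Classical in
lemma W_even {k : ℕ} (hk : 1 ≤ k)
    (hanti : ∀ p ∈ box m N, (∃ i b, p i = outv N b) → lab (-p) = flip (lab p)) :
    ((((CS m k).sigma fun s => (Fac N lab s).filter fun σ => Wb N s σ).card : ℕ) : ZMod 2) = 0 := by
  rw [Finset.card_eq_sum_ones]
  push_cast
  apply Finset.sum_involution
    (fun (x : Σ _ : Finset (Fin m × Bool), Finset (Fin m → ℤ)) _ =>
      (⟨x.1.image flip, x.2.image fun p => -p⟩ : Σ _ : Finset (Fin m × Bool), Finset (Fin m → ℤ)))
  · intros; decide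
  · rintro ⟨s, σ⟩ hx _ e
    rw [Finset.mem_sigma, mem_CS] at hx
    simp only at hx
    have e1 : s.image flip = s := congrArg (fun x => x.1) e
    have hne : s.Nonempty := Finset.card_pos.1 (by omega)
    obtain ⟨⟨i, b⟩, hl⟩ := hne
    have h2 := hl
    rw [← e1, mem_image_flip] at h2
    have := hx.1.1.eq hl h2
    cases b <;> simp at this
  · rintro ⟨s, σ⟩ hx
    rw [Finset.mem_sigma, mem_CS, Finset.mem_filter, mem_Fac] at hx ⊢
    simp only at hx ⊢
    obtain ⟨⟨hs, hk⟩, ⟨hK, hC, hc, hl⟩, ⟨i, b, hib, hw⟩⟩ := hx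
    refine ⟨⟨?_, ?_⟩, ⟨hK.neg, ?_, ?_, ?_⟩, ⟨i, !b, ?_, ?_⟩⟩
    · intro j
      rw [mem_image_flip, mem_image_flip]
      intro hh
      exact hs j ⟨hh.2, hh.1⟩
    · rw [Finset.card_image_of_injective _ flip_inj, hk]
    · intro p hp
      obtain ⟨p', hp', rfl⟩ := Finset.mem_image.1 hp
      exact (hC p' hp').neg
    · rw [Finset.card_image_of_injective _ flip_inj, Finset.card_image_of_injective _ neg_injective, hc]
    · rw [Finset.image_image]
      rw [← hl, Finset.image_image]
      apply Finset.image_congr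
      intro p hp
      exact hanti p (hC p hp).mem_box ⟨i, b, hw p hp⟩
    · rw [mem_image_flip]; simpa using hib
    · intro p hp
      obtain ⟨p', hp', rfl⟩ := Finset.mem_image.1 hp
      rw [Pi.neg_apply, hw p' hp']
      cases b <;> simp [outv]
  · rintro ⟨s, σ⟩ hx
    simp only [image_flip_flip, image_neg_neg]

open Classical in
lemma Z_count {k : ℕ}
    (hcomp : ∀ p ∈ box m N, ∀ q ∈ box m N, p ≤ q → (∀ i, q i ≤ p i + 1) → lab q ≠ flip (lab p)) :
    ((CS m (k+1)).sigma fun s => (Fac N lab s).filter fun σ => Zb s σ).card =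
      ((CS m k).sigma fun s => Good N lab s).card := by
  symm
  have hcons : ∀ r σ, σ ∈ Good N lab r → cons (σ.image lab) := by
    intro r σ hσ i ⟨h1, h2⟩
    obtain ⟨⟨hK, hC, _⟩, _⟩ := mem_Good.1 hσ
    obtain ⟨p, hp, e1⟩ := Finset.mem_image.1 h1
    obtain ⟨q, hq, e2⟩ := Finset.mem_image.1 h2
    rcases hK p hp q hq with h | h
    · exact hcomp p (hC p hp).mem_box q (hC q hq).mem_box h.1 h.2 (by rw [e1, e2]; rfl)
    · exact hcomp q (hC q hq).mem_box p (hC p hp).mem_box h.1 h.2 (by rw [e1, e2]; rfl)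
  apply Finset.card_bij
    (fun (x : Σ _ : Finset (Fin m × Bool), Finset (Fin m → ℤ)) _ =>
      (⟨x.2.image lab, x.2⟩ : Σ _ : Finset (Fin m × Bool), Finset (Fin m → ℤ)))
  · rintro ⟨r, σ⟩ hx
    rw [Finset.mem_sigma, mem_CS] at hx
    simp only at hx
    obtain ⟨⟨hr, hk⟩, hσ⟩ := hx
    have hs := hcons r σ hσ
    obtain ⟨⟨hK, hC, hc⟩, hsub, hcl⟩ := mem_Good.1 hσ
    rw [Finset.mem_sigma, mem_CS, Finset.mem_filter, mem_Fac]
    simp only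
    refine ⟨⟨hs, by omega⟩, ⟨hK, fun p hp => (hC p hp).mono hsub, by omega, trivial⟩, ?_⟩
    obtain ⟨⟨i, b⟩, hl, hlr⟩ := Finset.exists_mem_notMem_of_card_lt_card (s := r) (t := σ.image lab) (by omega)
    refine ⟨i, b, hl, fun p hp => ?_⟩
    rcases lt_trichotomy (p i) 0 with h1 | h1 | h1
    · have := (hC p hp i).2.2.2 h1
      have hb := hs.eq hl (hsub this)
      subst hb
      exact absurd this hlr
    · exact h1
    · have := (hC p hp i).2.2.1 h1
      have hb := hs.eq hl (hsub this)
      subst hb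
      exact absurd this hlr
  · rintro ⟨r, σ⟩ hx ⟨r', σ'⟩ hx' e
    have e2 : σ = σ' := congrArg (fun x => x.2) e
    subst e2
    rw [Finset.mem_sigma, mem_CS] at hx hx'
    simp only at hx hx'
    obtain ⟨⟨hr, hk⟩, hσ⟩ := hx
    obtain ⟨⟨hr', hk'⟩, hσ'⟩ := hx'
    obtain ⟨⟨hK, hC, hc⟩, _, _⟩ := mem_Good.1 hσ
    obtain ⟨⟨_, hC', _⟩, _, _⟩ := mem_Good.1 hσ'
    have hCi : ∀ p ∈ σ, inC N (r ∩ r') p := fun p hp i =>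
      ⟨(hC p hp i).1, (hC p hp i).2.1,
        fun h => Finset.mem_inter.2 ⟨(hC p hp i).2.2.1 h, (hC' p hp i).2.2.1 h⟩,
        fun h => Finset.mem_inter.2 ⟨(hC p hp i).2.2.2 h, (hC' p hp i).2.2.2 h⟩⟩
    have hle := hK.card_le ((r ∩ r').image Prod.fst) (fun p hp q hq i hi => by
      rw [(hCi p hp).zero hi, (hCi q hq).zero hi])
    have hle2 := Finset.card_image_le (s := r ∩ r') (f := Prod.fst)
    have h1 : r ∩ r' = r := Finset.eq_of_subset_of_card_le Finset.inter_subset_left (by omega)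
    have h2 : r ∩ r' = r' := Finset.eq_of_subset_of_card_le Finset.inter_subset_right (by omega)
    have : r = r' := by rw [← h1, h2]
    rw [this]
  · rintro ⟨s, σ⟩ hx
    rw [Finset.mem_sigma, mem_CS, Finset.mem_filter, mem_Fac] at hx
    simp only at hx
    obtain ⟨⟨hs, hk⟩, ⟨hK, hC, hc, hl⟩, ⟨i, b, hib, hz⟩⟩ := hx
    have hce := Finset.card_erase_add_one hib
    refine ⟨⟨s.erase (i, b), σ⟩, ?_, ?_⟩
    · rw [Finset.mem_sigma, mem_CS, mem_Good]
      simp only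
      refine ⟨⟨hs.mono (Finset.erase_subset _ _), by omega⟩, ⟨hK, ?_, by omega⟩, ?_, by rw [hl]; omega⟩
      · intro p hp j
        obtain ⟨h1, h2, h3, h4⟩ := hC p hp j
        refine ⟨h1, h2, fun h => Finset.mem_erase.2 ⟨?_, h3 h⟩, fun h => Finset.mem_erase.2 ⟨?_, h4 h⟩⟩
        · intro e
          have : j = i := congrArg Prod.fst e
          subst this
          rw [hz p hp] at h
          omega
        · intro e
          have : j = i := congrArg Prod.fst e
          subst this
          rw [hz p hp] at h
          omega
      · rw [hl]; exact Finset.erase_subset _ _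
    · simp only [hl]

lemma A_step {k : ℕ} (hN : 1 ≤ N)
    (hanti : ∀ p ∈ box m N, (∃ i b, p i = outv N b) → lab (-p) = flip (lab p))
    (hcomp : ∀ p ∈ box m N, ∀ q ∈ box m N, p ≤ q → (∀ i, q i ≤ p i + 1) → lab q ≠ flip (lab p)) :
    ((((CS m (k+1)).sigma fun s => Good N lab s).card : ℕ) : ZMod 2) =
      (((CS m k).sigma fun s => Good N lab s).card : ℕ) := by
  classical
  have hW := W_even lab (k := k + 1) (by omega) hanti
  rw [← Z_count (k := k) lab hcomp]
  rw [Finset.card_sigma] at hW ⊢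
  rw [Finset.card_sigma]
  push_cast at hW ⊢
  rw [← add_zero (∑ _ ∈ _, _), ← hW, ← Finset.sum_add_distrib]
  apply Finset.sum_congr rfl
  intro s hs
  obtain ⟨hs, hk⟩ := mem_CS.1 hs
  have hne : s.Nonempty := Finset.card_pos.1 (by omega)
  rw [count_s hN lab hs hne, Finset.filter_or, Finset.card_union_of_disjoint]
  · push_cast
    have h2 : ∀ a b : ZMod 2, a + b + b = a := by decide
    exact h2 _ _
  · rw [Finset.disjoint_filter]
    intro σ hσ h1 h2
    exact not_Z_W lab hN hs hne hσ ⟨h1, h2⟩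

/-- Tucker's lemma for the Kuhn triangulation of the cube. -/
theorem tucker (hN : 1 ≤ N)
    (hanti : ∀ p ∈ box m N, (∃ i b, p i = outv N b) → lab (-p) = flip (lab p))
    (hcomp : ∀ p ∈ box m N, ∀ q ∈ box m N, p ≤ q → (∀ i, q i ≤ p i + 1) → lab q ≠ flip (lab p)) :
    False := by
  classical
  have hall : ∀ k, ((((CS m k).sigma fun s => Good N lab s).card : ℕ) : ZMod 2) = 1 := by
    intro k
    induction k with
    | zero =>
      have : ((CS m 0).sigma fun s => Good N lab s) = {⟨∅, {0}⟩} := by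
        ext ⟨s, τ⟩
        rw [Finset.mem_sigma, mem_CS, mem_Good, Finset.mem_singleton]
        simp only
        constructor
        · rintro ⟨⟨_, h1⟩, ⟨_, h2, h3⟩, _, _⟩
          have hs : s = ∅ := Finset.card_eq_zero.1 h1
          subst hs
          obtain ⟨p, rfl⟩ := Finset.card_eq_one.1 h3
          have : p = 0 := by
            funext i
            exact (h2 p (Finset.mem_singleton_self p)).zero (by simp)
          rw [this]
        · intro e
          have e1 : s = ∅ := congrArg (fun x => x.1) e
          have e2 : τ = {0} := congrArg (fun x => x.2) e
          subst e1 e2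
          refine ⟨⟨fun i => by simp, by simp⟩, ⟨?_, ?_, by simp⟩, by simp, by simp⟩
          · intro p hp q hq
            rw [Finset.mem_singleton] at hp hq
            subst hp hq
            exact Or.inl ⟨le_rfl, fun i => by simp⟩
          · intro p hp
            rw [Finset.mem_singleton] at hp
            subst hp
            intro i
            simp only [Pi.zero_apply]
            refine ⟨by omega, by omega, by simp, by simp⟩
      rw [this]; simp
    | succ k ih => rw [A_step lab hN hanti hcomp, ih]
  have h := hall m
  have he : ((CS m m).sigma fun s => Good N lab s) = ∅ := by
    rw [Finset.eq_empty_iff_forall_notMem]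
    rintro ⟨r, σ⟩ hx
    rw [Finset.mem_sigma, mem_CS] at hx
    simp only at hx
    obtain ⟨⟨hr, hk⟩, hσ⟩ := hx
    obtain ⟨⟨hK, hC, hc⟩, hsub, hcl⟩ := mem_Good.1 hσ
    have hcons : cons (σ.image lab) := by
      intro i ⟨h1, h2⟩
      obtain ⟨p, hp, e1⟩ := Finset.mem_image.1 h1
      obtain ⟨q, hq, e2⟩ := Finset.mem_image.1 h2
      rcases hK p hp q hq with h | h
      · exact hcomp p (hC p hp).mem_box q (hC q hq).mem_box h.1 h.2 (by rw [e1, e2]; rfl)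
      · exact hcomp q (hC q hq).mem_box p (hC p hp).mem_box h.1 h.2 (by rw [e1, e2]; rfl)
    have h1 := hcons.card
    have h2 := Finset.card_le_univ ((σ.image lab).image Prod.fst)
    simp only [Fintype.card_fin] at h2
    omega
  rw [he] at h
  simp at h

end


/-- Borsuk–Ulam on the cube. -/
theorem borsukUlam (g : (Fin m → ℝ) → (Fin m → ℝ)) (hc : ContinuousOn g {x | ‖x‖ ≤ 1})
    (hodd : ∀ x, ‖x‖ = 1 → g (-x) = -g x) (hne : ∀ x, ‖x‖ ≤ 1 → g x ≠ 0) : False := by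
  classical
  rcases Nat.eq_zero_or_pos m with rfl | hm
  · exact hne 0 (by rw [norm_zero]; exact zero_le_one) (Subsingleton.elim _ _)
  have hset : {x : Fin m → ℝ | ‖x‖ ≤ 1} = Metric.closedBall 0 1 := by
    ext x; simp
  have hcpt : IsCompact {x : Fin m → ℝ | ‖x‖ ≤ 1} := by
    rw [hset]; exact isCompact_closedBall _ _
  obtain ⟨x0, hx0, hmin⟩ := hcpt.exists_isMinOn ⟨0, by simp⟩ hc.norm
  have hδ : 0 < ‖g x0‖ := norm_pos_iff.2 (hne x0 hx0)
  have hmin' : ∀ x, ‖x‖ ≤ 1 → ‖g x0‖ ≤ ‖g x‖ := fun x hx => hmin hx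
  have huc := hcpt.uniformContinuousOn_of_continuous hc
  obtain ⟨η, hη, hunif⟩ := Metric.uniformContinuousOn_iff.1 huc ‖g x0‖ hδ
  obtain ⟨N', hN'⟩ := exists_nat_gt (1 / η)
  have hN'0 : (0 : ℝ) < N' := lt_trans (by positivity) hN'
  have hN1 : (1 : ℤ) ≤ N' := by
    have : 0 < N' := by exact_mod_cast hN'0
    omega
  have hinv : (1 : ℝ) / N' < η := by
    rw [div_lt_iff₀ hN'0]; rw [div_lt_iff₀ hη] at hN'; linarith
  have : Nonempty (Fin m) := ⟨⟨0, hm⟩⟩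
  have hex : ∀ v : Fin m → ℝ, ∃ i, ∀ j, v j ≤ v i := fun v => Finite.exists_max v
  choose idx hidx using hex
  have hidxn : ∀ w : Fin m → ℝ, ‖w‖ ≤ |w (idx fun i => |w i|)| := by
    intro w
    rw [pi_norm_le_iff_of_nonneg (abs_nonneg _)]
    intro j
    exact hidx (fun i => |w i|) j
  let X : (Fin m → ℤ) → (Fin m → ℝ) := fun p i => (p i : ℝ) / N'
  have hXn : ∀ p ∈ box m N', ‖X p‖ ≤ 1 := by
    intro p hp
    rw [pi_norm_le_iff_of_nonneg zero_le_one]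
    intro i
    have h := Finset.mem_Icc.1 (Fintype.mem_piFinset.1 hp i)
    rw [Real.norm_eq_abs, abs_div, abs_of_pos hN'0, div_le_one hN'0, abs_le]
    exact ⟨by exact_mod_cast h.1, by exact_mod_cast h.2⟩
  let I : (Fin m → ℝ) → Fin m := fun w => idx fun i => |w i|
  have hIneg : ∀ w, I (-w) = I w := by
    intro w; simp only [I, Pi.neg_apply, abs_neg]
  have hgI : ∀ x, ‖x‖ ≤ 1 → ‖g x0‖ ≤ |g x (I (g x))| := fun x hx => (hmin' x hx).trans (hidxn _)
  refine tucker (N := N') (fun p => (I (g (X p)), decide (0 < g (X p) (I (g (X p)))))) hN1 ?_ ?_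
  · rintro p hp ⟨i, b, hib⟩
    have hXneg : X (-p) = - X p := by
      funext i; simp [X, neg_div]
    have h1 : ‖X p‖ = 1 := by
      apply le_antisymm (hXn p hp)
      have : ‖X p i‖ = 1 := by
        rw [Real.norm_eq_abs]
        simp only [X, hib, outv]
        rw [abs_div, abs_of_pos hN'0]
        cases b <;> simp [hN'0.ne']
      rw [← this]; exact norm_le_pi_norm _ i
    have hgn := hgI (X p) (hXn p hp)
    have hne0 : g (X p) (I (g (X p))) ≠ 0 := by
      intro h; rw [h, abs_zero] at hgn; linarith
    simp only [hXneg, hodd _ h1, hIneg, flip, Pi.neg_apply, Prod.mk.injEq, true_and]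
    rcases lt_or_gt_of_ne hne0 with h | h
    · simp [h, h.le]
    · simp [h, h.le]
  · intro p hp q hq hpq hle heq
    simp only [flip, Prod.mk.injEq] at heq
    obtain ⟨e1, e2⟩ := heq
    have hd : dist (X q) (X p) < η := by
      refine lt_of_le_of_lt ?_ hinv
      rw [dist_pi_le_iff (by positivity)]
      intro i
      rw [Real.dist_eq]
      simp only [X]
      rw [← sub_div, abs_div, abs_of_pos hN'0]
      gcongr
      have a1 : p i ≤ q i := hpq i
      have a2 := hle i
      rw [abs_le]
      have a1' : (p i : ℝ) ≤ q i := by exact_mod_cast a1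
      have a2' : (q i : ℝ) ≤ p i + 1 := by exact_mod_cast a2
      constructor <;> linarith
    have hlt := hunif (X q) (hXn q hq) (X p) (hXn p hp) hd
    have hlt2 := lt_of_le_of_lt (dist_le_pi_dist (g (X q)) (g (X p)) (I (g (X p)))) hlt
    have hgp := hgI (X p) (hXn p hp)
    have hgq := hgI (X q) (hXn q hq)
    rw [e1] at hgq e2
    rw [Real.dist_eq, abs_lt] at hlt2
    by_cases h : 0 < g (X p) (I (g (X p)))
    · have h' : ¬ 0 < g (X q) (I (g (X p))) := by simpa [h] using e2
      rw [abs_of_pos h] at hgp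
      rw [abs_of_nonpos (not_lt.1 h')] at hgq
      linarith
    · have h' : 0 < g (X q) (I (g (X p))) := by simpa [h] using e2
      rw [abs_of_nonpos (not_lt.1 h)] at hgp
      rw [abs_of_pos h'] at hgq
      linarith

end BU

/-- auxiliary map of the `m`-cube into a shell of `ℝᵏ`, `m < k`. -/
def shellMap (m k : ℕ) (x : Fin m → ℝ) (i : Fin k) : ℝ :=
  if h : (i : ℕ) < m then x ⟨i, h⟩ else if (i : ℕ) = m then 1 - ‖x‖ else 0

lemma shellMap_cont (m k : ℕ) : Continuous (shellMap m k) := by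
  apply continuous_pi
  intro i
  unfold shellMap
  split_ifs
  · exact continuous_apply _
  · fun_prop
  · fun_prop

lemma shellMap_neg {m k : ℕ} {x : Fin m → ℝ} (hx : ‖x‖ = 1) :
    shellMap m k (-x) = - shellMap m k x := by
  funext i
  simp only [shellMap, Pi.neg_apply, norm_neg, hx]
  split_ifs <;> simp

lemma shellMap_mem {m k : ℕ} (hmk : m < k) {x : Fin m → ℝ} (hx : ‖x‖ ≤ 1) :
    1 / 2 ≤ ‖shellMap m k x‖ ∧ ‖shellMap m k x‖ ≤ 1 := by
  constructor
  · by_contra hlt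
    push Not at hlt
    have h1 : ‖x‖ ≤ ‖shellMap m k x‖ := by
      rw [pi_norm_le_iff_of_nonneg (norm_nonneg _)]
      intro i
      have := norm_le_pi_norm (shellMap m k x) ⟨i, i.2.trans hmk⟩
      simpa [shellMap] using this
    have h2 : |1 - ‖x‖| ≤ ‖shellMap m k x‖ := by
      have := norm_le_pi_norm (shellMap m k x) ⟨m, hmk⟩
      simpa [shellMap] using this
    have := le_abs_self (1 - ‖x‖)
    linarith
  · rw [pi_norm_le_iff_of_nonneg zero_le_one]
    intro i
    unfold shellMap
    split_ifs
    · exact (norm_le_pi_norm x _).trans hx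
    · rw [Real.norm_eq_abs, abs_le]
      have := norm_nonneg x
      constructor <;> linarith
    · simp

def shell (k : ℕ) : Set (Fin k → ℝ) := {a | 1 / 2 ≤ ‖a‖ ∧ ‖a‖ ≤ 1}

lemma shell_compact (k : ℕ) : IsCompact (shell k) := by
  have : shell k = Metric.closedBall 0 1 ∩ {a | 1 / 2 ≤ ‖a‖} := by
    ext a; simp [shell, and_comm]
  rw [this]
  exact (isCompact_closedBall _ _).inter_right (isClosed_le continuous_const continuous_norm)

lemma genus_shell {k : ℕ} (L : (Fin k → ℝ) →ₗ[ℝ] (Fin n → ℝ)) (hL : Function.Injective L) :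
    IsCompact (L '' shell k) ∧ (∀ x ∈ L '' shell k, -x ∈ L '' shell k) ∧
    (0 : Fin n → ℝ) ∉ L '' shell k ∧ GenusGe (L '' shell k) k := by
  have hcont : Continuous L := LinearMap.continuous_of_finiteDimensional L
  refine ⟨(shell_compact k).image hcont, ?_, ?_, ?_⟩
  · rintro _ ⟨a, ha, rfl⟩
    exact ⟨-a, by simpa [shell] using ha, by simp⟩
  · rintro ⟨a, ha, h0⟩
    have : a = 0 := hL (by simpa using h0)
    subst this
    have := ha.1
    norm_num at this
  · rintro m ⟨f, hf, hodd, hne⟩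
    by_contra hlt
    push Not at hlt
    have hmem : ∀ x : Fin m → ℝ, ‖x‖ ≤ 1 → L (shellMap m k x) ∈ L '' shell k :=
      fun x hx => ⟨_, shellMap_mem hlt hx, rfl⟩
    refine BU.borsukUlam (fun x => f (L (shellMap m k x))) ?_ ?_ ?_
    · exact hf.comp (hcont.comp (shellMap_cont m k)).continuousOn (fun x hx => hmem x hx)
    · intro x hx
      show f (L (shellMap m k (-x))) = -f (L (shellMap m k x))
      rw [shellMap_neg hx, map_neg, hodd _ (hmem x hx.le)]
    · intro x hx
      exact hne _ (hmem x hx)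

section upper
variable (G : SimpleGraph (Fin n)) [DecidableRel G.Adj]

lemma degR_eq (i : Fin n) : degR G i = ∑ j, if G.Adj i j then (1 : ℝ) else 0 := by
  rw [degR, ← SimpleGraph.card_neighborFinset_eq_degree, SimpleGraph.neighborFinset_eq_filter,
    Finset.card_filter]
  push_cast
  rfl

lemma sum_adj_left (f : Fin n → ℝ) :
    (∑ i, ∑ j, if G.Adj i j then f i else 0) = ∑ i, degR G i * f i := by
  apply Finset.sum_congr rfl
  intro i _
  rw [degR_eq, Finset.sum_mul]
  apply Finset.sum_congr rfl
  intro j _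
  split_ifs <;> simp

lemma sum_adj_right (f : Fin n → ℝ) :
    (∑ i, ∑ j, if G.Adj i j then f j else 0) = ∑ i, degR G i * f i := by
  rw [Finset.sum_comm, ← sum_adj_left]
  simp only [G.adj_comm]

lemma IplusU_nonneg (x : Fin n → ℝ) : 0 ≤ IplusU G x := by
  unfold IplusU
  apply div_nonneg _ zero_le_two
  refine Finset.sum_nonneg fun i _ => Finset.sum_nonneg fun j _ => ?_
  split_ifs <;> positivity

lemma den_nonneg (x : Fin n → ℝ) : 0 ≤ ∑ i, degR G i * |x i| :=
  Finset.sum_nonneg fun i _ => mul_nonneg (by unfold degR; positivity) (abs_nonneg _)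

lemma IplusU_le (x : Fin n → ℝ) : IplusU G x ≤ ∑ i, degR G i * |x i| := by
  unfold IplusU
  have h : (∑ i, ∑ j, if G.Adj i j then |x i + x j| else 0) ≤
      (∑ i, ∑ j, if G.Adj i j then |x i| else 0) + ∑ i, ∑ j, if G.Adj i j then |x j| else 0 := by
    simp only [← Finset.sum_add_distrib]
    refine Finset.sum_le_sum fun i _ => Finset.sum_le_sum fun j _ => ?_
    split_ifs
    · exact abs_add_le _ _
    · simp
  rw [sum_adj_left G (fun i => |x i|), sum_adj_right G (fun i => |x i|)] at h
  linarith

lemma Ray_nonneg (x : Fin n → ℝ) : 0 ≤ RayleighPlus G x :=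
  div_nonneg (IplusU_nonneg G x) (den_nonneg G x)

lemma Ray_le_one (x : Fin n → ℝ) : RayleighPlus G x ≤ 1 :=
  div_le_one_of_le₀ (IplusU_le G x) (den_nonneg G x)

/-- signed indicator -/
def sg (P Q : Finset (Fin n)) (v : Fin n) : ℝ := if v ∈ P then 1 else if v ∈ Q then -1 else 0

lemma abs_sg (P Q : Finset (Fin n)) (v : Fin n) :
    |sg P Q v| = if v ∈ P ∪ Q then 1 else 0 := by
  unfold sg
  by_cases h1 : v ∈ P <;> by_cases h2 : v ∈ Q <;> simp [h1, h2]

lemma den_sg (P Q : Finset (Fin n)) : ∑ i, degR G i * |sg P Q i| = volF G (P ∪ Q) := by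
  simp only [abs_sg, volF, mul_ite, mul_one, mul_zero]
  rw [Finset.sum_ite_mem, Finset.univ_inter]

lemma cut_eq (P Q : Finset (Fin n)) :
    cutE G P Q = ∑ i, ∑ j, if G.Adj i j then (if i ∈ P ∧ j ∈ Q then (1 : ℝ) else 0) else 0 := by
  unfold cutE
  rw [← Finset.univ_inter P, ← Finset.sum_ite_mem]
  apply Finset.sum_congr rfl
  intro i _
  by_cases hi : i ∈ P
  · simp only [hi, if_true]
    rw [← Finset.univ_inter Q, ← Finset.sum_ite_mem]
    apply Finset.sum_congr rfl
    intro j _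
    by_cases hj : j ∈ Q <;> simp [hj, hi]
  · simp [hi]

lemma cut_symm (P Q : Finset (Fin n)) : cutE G P Q = cutE G Q P := by
  unfold cutE
  rw [Finset.sum_comm]
  simp only [G.adj_comm]

lemma Iplus_sg {P Q : Finset (Fin n)} (h : Disjoint P Q) :
    IplusU G (sg P Q) = volF G (P ∪ Q) - 2 * cutE G P Q := by
  have key : ∀ i j, |sg P Q i + sg P Q j| = |sg P Q i| + |sg P Q j|
      - 2 * (if i ∈ P ∧ j ∈ Q then (1 : ℝ) else 0) - 2 * (if i ∈ Q ∧ j ∈ P then (1 : ℝ) else 0) := by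
    intro i j
    have hi : i ∈ P → i ∉ Q := fun h1 => Finset.disjoint_left.1 h h1
    have hj : j ∈ P → j ∉ Q := fun h1 => Finset.disjoint_left.1 h h1
    unfold sg
    by_cases h1 : i ∈ P <;> by_cases h2 : i ∈ Q <;> by_cases h3 : j ∈ P <;> by_cases h4 : j ∈ Q <;>
      simp_all <;> norm_num
  have h1 : (∑ i, ∑ j, if G.Adj i j then |sg P Q i + sg P Q j| else 0) =
      (∑ i, ∑ j, if G.Adj i j then |sg P Q i| else 0) +
      (∑ i, ∑ j, if G.Adj i j then |sg P Q j| else 0)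
      - 2 * cutE G P Q - 2 * cutE G Q P := by
    rw [cut_eq, cut_eq]
    simp only [Finset.mul_sum, ← Finset.sum_add_distrib, ← Finset.sum_sub_distrib]
    refine Finset.sum_congr rfl fun i _ => Finset.sum_congr rfl fun j _ => ?_
    by_cases hA : G.Adj i j
    · simp only [hA, if_true]; exact key i j
    · simp [hA]
  unfold IplusU
  rw [h1, sum_adj_left G (fun i => |sg P Q i|), sum_adj_right G (fun i => |sg P Q i|), den_sg,
    cut_symm G Q P]
  ring

variable {k : ℕ} (P Q : Fin k → Finset (Fin n))

/-- linear map spanned by the signed indicators -/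
def Lmap : (Fin k → ℝ) →ₗ[ℝ] (Fin n → ℝ) where
  toFun a v := ∑ i, a i * sg (P i) (Q i) v
  map_add' a b := by
    funext v; simp [add_mul, Finset.sum_add_distrib]
  map_smul' c a := by
    funext v; simp [Finset.mul_sum, mul_assoc]

variable {P Q}

lemma Lmap_on (hPQ : ∀ i j, i ≠ j → Disjoint (P i ∪ Q i) (P j ∪ Q j)) (a : Fin k → ℝ) {i : Fin k}
    {v : Fin n} (hv : v ∈ P i ∪ Q i) : Lmap P Q a v = a i * sg (P i) (Q i) v := by
  show ∑ i, a i * sg (P i) (Q i) v = _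
  apply Finset.sum_eq_single i
  · intro j _ hji
    have : v ∉ P j ∪ Q j := Finset.disjoint_left.1 (hPQ i j hji.symm) hv
    have h0 : |sg (P j) (Q j) v| = 0 := by rw [abs_sg, if_neg this]
    rw [abs_eq_zero.1 h0, mul_zero]
  · simp

lemma Lmap_abs (hPQ : ∀ i j, i ≠ j → Disjoint (P i ∪ Q i) (P j ∪ Q j)) (a : Fin k → ℝ)
    (v : Fin n) : |Lmap P Q a v| = ∑ i, |a i| * |sg (P i) (Q i) v| := by
  by_cases h : ∃ i, v ∈ P i ∪ Q i
  · obtain ⟨i, hv⟩ := h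
    rw [Lmap_on hPQ a hv, abs_mul]
    symm
    apply Finset.sum_eq_single i
    · intro j _ hji
      have : v ∉ P j ∪ Q j := Finset.disjoint_left.1 (hPQ i j hji.symm) hv
      rw [abs_sg, if_neg this, mul_zero]
    · simp
  · push Not at h
    have h0 : ∀ i, sg (P i) (Q i) v = 0 := by
      intro i
      apply abs_eq_zero.1
      rw [abs_sg, if_neg (h i)]
    show |∑ i, a i * sg (P i) (Q i) v| = _
    simp [h0]

lemma Lmap_inj (hPQ : ∀ i j, i ≠ j → Disjoint (P i ∪ Q i) (P j ∪ Q j))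
    (hne : ∀ i, (P i ∪ Q i).Nonempty) : Function.Injective (Lmap P Q) := by
  intro a b hab
  funext i
  obtain ⟨v, hv⟩ := hne i
  have h1 := congrFun hab v
  rw [Lmap_on hPQ a hv, Lmap_on hPQ b hv] at h1
  have : sg (P i) (Q i) v ≠ 0 := by
    rw [← abs_ne_zero, abs_sg, if_pos hv]; exact one_ne_zero
  exact mul_right_cancel₀ this h1

lemma Lmap_den (hPQ : ∀ i j, i ≠ j → Disjoint (P i ∪ Q i) (P j ∪ Q j)) (a : Fin k → ℝ) :
    ∑ v, degR G v * |Lmap P Q a v| = ∑ i, |a i| * volF G (P i ∪ Q i) := by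
  simp only [Lmap_abs hPQ, ← den_sg, Finset.mul_sum]
  rw [Finset.sum_comm]
  refine Finset.sum_congr rfl fun i _ => Finset.sum_congr rfl fun j _ => ?_
  ring

lemma Lmap_I (hd : ∀ i, Disjoint (P i) (Q i)) (a : Fin k → ℝ) :
    IplusU G (Lmap P Q a) ≤ ∑ i, |a i| * (volF G (P i ∪ Q i) - 2 * cutE G (P i) (Q i)) := by
  simp only [← Iplus_sg G (hd _)]
  unfold IplusU
  have : ∑ i, |a i| * ((∑ u, ∑ v, if G.Adj u v then |sg (P i) (Q i) u + sg (P i) (Q i) v| else 0) / 2)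
      = (∑ u, ∑ v, if G.Adj u v then ∑ i, |a i| * |sg (P i) (Q i) u + sg (P i) (Q i) v| else 0) / 2 := by
    simp only [← mul_div_assoc, ← Finset.sum_div, Finset.mul_sum]
    congr 1
    rw [Finset.sum_comm]
    refine Finset.sum_congr rfl fun u _ => ?_
    rw [Finset.sum_comm]
    refine Finset.sum_congr rfl fun v _ => ?_
    split_ifs <;> simp
  rw [this]
  gcongr with u _ v _
  split_ifs
  · calc |Lmap P Q a u + Lmap P Q a v|
        = |∑ i, a i * (sg (P i) (Q i) u + sg (P i) (Q i) v)| := by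
          simp only [Lmap, LinearMap.coe_mk, AddHom.coe_mk, mul_add, Finset.sum_add_distrib]
      _ ≤ ∑ i, |a i * (sg (P i) (Q i) u + sg (P i) (Q i) v)| := Finset.abs_sum_le_sum_abs _ _
      _ = _ := by simp only [abs_mul]
  · exact le_rfl

lemma volF_pos (hiso : ∀ i, 0 < G.degree i) {S : Finset (Fin n)} (h : S.Nonempty) :
    0 < volF G S :=
  Finset.sum_pos (fun i _ => by unfold degR; exact_mod_cast hiso i) h

lemma upper_A (hiso : ∀ i, 0 < G.degree i) (hk : 1 ≤ k) (hd : ∀ i, Disjoint (P i) (Q i))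
    (hPQ : ∀ i j, i ≠ j → Disjoint (P i ∪ Q i) (P j ∪ Q j)) (hne : ∀ i, (P i ∪ Q i).Nonempty) :
    ∃ A : Set (Fin n → ℝ), IsCompact A ∧ (∀ x ∈ A, -x ∈ A) ∧
    (0 : Fin n → ℝ) ∉ A ∧ GenusGe A k ∧
    sSup (RayleighPlus G '' A) ≤ 1 - ⨅ i, 2 * cutE G (P i) (Q i) / volF G (P i ∪ Q i) := by
  obtain ⟨h1, h2, h3, h4⟩ := genus_shell (Lmap P Q) (Lmap_inj hPQ hne)
  refine ⟨_, h1, h2, h3, h4, ?_⟩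
  have : Nonempty (Fin k) := ⟨⟨0, hk⟩⟩
  have hnonempty : (shell k).Nonempty := ⟨fun _ => 1, by
    have : ‖(fun _ : Fin k => (1 : ℝ))‖ = 1 := by rw [pi_norm_const]; simp
    constructor <;> rw [this] <;> norm_num⟩
  apply csSup_le ((hnonempty.image _).image _)
  rintro _ ⟨_, ⟨a, ha, rfl⟩, rfl⟩
  set r := ⨅ i, 2 * cutE G (P i) (Q i) / volF G (P i ∪ Q i) with hr
  have hri : ∀ i, r * volF G (P i ∪ Q i) ≤ 2 * cutE G (P i) (Q i) := by
    intro i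
    rw [← le_div_iff₀ (volF_pos G hiso (hne i))]
    exact ciInf_le (Set.finite_range _).bddBelow i
  have hden : 0 < ∑ i, |a i| * volF G (P i ∪ Q i) := by
    have ha0 : a ≠ 0 := by
      rintro rfl
      have := ha.1
      norm_num at this
    obtain ⟨i, hi⟩ := Function.ne_iff.1 ha0
    refine Finset.sum_pos' (fun j _ => mul_nonneg (abs_nonneg _) (volF_pos G hiso (hne j)).le)
      ⟨i, Finset.mem_univ _, mul_pos (abs_pos.2 hi) (volF_pos G hiso (hne i))⟩
  unfold RayleighPlus
  rw [Lmap_den G hPQ, div_le_iff₀ hden]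
  refine (Lmap_I G hd a).trans ?_
  rw [Finset.mul_sum]
  refine Finset.sum_le_sum fun i _ => ?_
  have := mul_le_mul_of_nonneg_left (hri i) (abs_nonneg (a i))
  nlinarith

end upper

section pierce
variable {V : Type*} [DecidableEq V] {G : SimpleGraph V}

lemma exists_leaf [Finite V] (hG : G.IsAcyclic) (U : Finset V) (hU : U.Nonempty) :
    ∃ v ∈ U, ∀ a ∈ U, ∀ b ∈ U, G.Adj v a → G.Adj v b → a = b := by
  have hH := hG.induce (U : Set V)
  have : Nonempty (U : Set V) := hU.to_subtype
  have ⟨u, v, p, hp, hmax⟩ := SimpleGraph.Walk.exists_isPath_forall_isPath_length_le_length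
    (G.induce (U : Set V))
  have key : ∀ w, (G.induce (U : Set V)).Adj u w → w = p.snd := by
    intro w hadj
    apply hH.eq_snd_of_adj_start hp hadj
    by_contra hw
    have h1 := hmax _ _ (p.cons hadj.symm) (hp.cons hw)
    rw [SimpleGraph.Walk.length_cons] at h1
    omega
  refine ⟨u, u.2, fun a ha b hb h1 h2 => ?_⟩
  have e1 := key ⟨a, ha⟩ h1
  have e2 := key ⟨b, hb⟩ h2
  exact congrArg Subtype.val (e1.trans e2.symm)

/-- connectedness of a finite vertex set -/
def Conn (G : SimpleGraph V) (S : Finset V) : Prop :=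
  ∀ A ⊆ S, A.Nonempty → A ≠ S → ∃ a ∈ A, ∃ b ∈ S, b ∉ A ∧ G.Adj a b

lemma Conn.erase {U S : Finset V} {v : V} (hS : Conn G S) (hSU : S ⊆ U)
    (hv : ∀ a ∈ U, ∀ b ∈ U, G.Adj v a → G.Adj v b → a = b) : Conn G (S.erase v) := by
  by_cases hvS : v ∈ S
  swap
  · rwa [Finset.erase_eq_of_notMem hvS]
  intro A hA hne hneq
  have hvA : v ∉ A := fun h => (Finset.mem_erase.1 (hA h)).1 rfl
  have hAS : A ⊆ S := hA.trans (Finset.erase_subset _ _)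
  obtain ⟨a, ha, b, hb, hbA, hab⟩ := hS A hAS hne (by rintro rfl; exact hvA hvS)
  by_cases hbv : b = v
  swap
  · exact ⟨a, ha, b, Finset.mem_erase.2 ⟨hbv, hb⟩, hbA, hab⟩
  subst hbv
  obtain ⟨a', ha', b', hb', hbA', hab'⟩ := hS (insert b A)
    (Finset.insert_subset hvS hAS) (Finset.insert_nonempty _ _)
    (by intro e; apply hneq; rw [← e, Finset.erase_insert hvA])
  rw [Finset.mem_insert, not_or] at hbA'
  rcases Finset.mem_insert.1 ha' with rfl | ha'
  · exfalso
    have := hv a (hSU (hAS ha)) b' (hSU hb') hab.symm hab'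
    subst this
    exact hbA'.2 ha
  · exact ⟨a', ha', b', Finset.mem_erase.2 ⟨hbA'.1, hb'⟩, hbA'.2, hab'⟩

lemma pierce [Finite V] (hG : G.IsAcyclic) (N : ℕ) : ∀ (U : Finset V), U.card = N →
    ∀ (F : Finset V → Prop) (k : ℕ), (∀ S, F S → S.Nonempty ∧ S ⊆ U ∧ Conn G S) →
    (∃ f : Fin k → Finset V, (∀ i, F (f i)) ∧ ∀ i j, i ≠ j → Disjoint (f i) (f j)) ∨
    ∃ T : Finset V, T.card < k ∧ ∀ S, F S → ∃ v ∈ T, v ∈ S := by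
  induction N with
  | zero =>
    intro U hU F k hF
    rcases Nat.eq_zero_or_pos k with rfl | hk
    · exact Or.inl ⟨Fin.elim0, fun i => i.elim0, fun i => i.elim0⟩
    right
    refine ⟨∅, by simpa using hk, fun S hS => ?_⟩
    obtain ⟨h1, h2, -⟩ := hF S hS
    rw [Finset.card_eq_zero.1 hU, Finset.subset_empty] at h2
    exact absurd h2 h1.ne_empty
  | succ N ih =>
    intro U hU F k hF
    rcases k with _ | k
    · exact Or.inl ⟨Fin.elim0, fun i => i.elim0, fun i => i.elim0⟩
    obtain ⟨v, hvU, hv⟩ := exists_leaf hG U (Finset.card_pos.1 (by omega))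
    have hU' : (U.erase v).card = N := by rw [Finset.card_erase_of_mem hvU]; omega
    by_cases hFv : F {v}
    · rcases ih (U.erase v) hU' (fun S => F S ∧ v ∉ S) k (fun S hS =>
        ⟨(hF S hS.1).1, Finset.subset_erase.2 ⟨(hF S hS.1).2.1, hS.2⟩, (hF S hS.1).2.2⟩) with
        ⟨f, hf, hd⟩ | ⟨T, hT, hh⟩
      · left
        refine ⟨Fin.cons {v} f, ?_, ?_⟩
        · intro i
          refine Fin.cases ?_ (fun i => ?_) i
          · simpa using hFv
          · simpa using (hf i).1
        · intro i j
          refine Fin.cases ?_ (fun i => ?_) i <;> refine Fin.cases ?_ (fun j => ?_) j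
          · simp
          · intro _; simpa using (hf j).2
          · intro _; simpa using (hf i).2
          · intro h; simpa using hd i j (by simpa using h)
      · right
        refine ⟨insert v T, lt_of_le_of_lt (Finset.card_insert_le _ _) (by omega), fun S hS => ?_⟩
        by_cases hvS : v ∈ S
        · exact ⟨v, Finset.mem_insert_self _ _, hvS⟩
        · obtain ⟨w, hw, hwS⟩ := hh S ⟨hS, hvS⟩
          exact ⟨w, Finset.mem_insert_of_mem hw, hwS⟩
    · rcases ih (U.erase v) hU' (fun S' => ∃ S, F S ∧ S' = S.erase v) (k + 1) (by
        rintro _ ⟨S, hS, rfl⟩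
        obtain ⟨h1, h2, h3⟩ := hF S hS
        refine ⟨?_, Finset.erase_subset_erase _ h2, h3.erase h2 hv⟩
        rw [Finset.nonempty_iff_ne_empty]
        intro h0
        rcases Finset.erase_eq_empty_iff .. |>.1 h0 with h | h
        · exact h1.ne_empty h
        · rw [h] at hS; exact hFv hS) with
        ⟨f, hf, hd⟩ | ⟨T, hT, hh⟩
      · left
        choose S hS hfS using hf
        refine ⟨S, hS, fun i j hij => ?_⟩
        rw [Finset.disjoint_left]
        intro w hwi hwj
        have hdis := hd i j hij
        rw [hfS, hfS, Finset.disjoint_left] at hdis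
        by_cases hwv : w = v
        · subst hwv
          have nb : ∀ i, w ∈ S i → ∃ b ∈ (S i).erase w, G.Adj w b := by
            intro i hw
            obtain ⟨a, ha, b, hb, hbn, hab⟩ := (hF _ (hS i)).2.2 {w}
              (Finset.singleton_subset_iff.2 hw) (Finset.singleton_nonempty _)
              (fun e => hFv (e ▸ hS i))
            rw [Finset.mem_singleton] at ha hbn
            subst ha
            exact ⟨b, Finset.mem_erase.2 ⟨hbn, hb⟩, hab⟩
          obtain ⟨b, hb, hab⟩ := nb i hwi
          obtain ⟨b', hb', hab'⟩ := nb j hwj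
          have := hv b ((hF _ (hS i)).2.1 (Finset.mem_of_mem_erase hb)) b'
            ((hF _ (hS j)).2.1 (Finset.mem_of_mem_erase hb')) hab hab'
          subst this
          exact hdis hb hb'
        · exact hdis (Finset.mem_erase.2 ⟨hwv, hwi⟩) (Finset.mem_erase.2 ⟨hwv, hwj⟩)
      · right
        refine ⟨T, hT, fun S hS => ?_⟩
        obtain ⟨w, hw, hwS⟩ := hh _ ⟨S, hS, rfl⟩
        exact ⟨w, hw, Finset.mem_of_mem_erase hwS⟩

end pierce

section lower
variable (G : SimpleGraph (Fin n)) [DecidableRel G.Adj]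

/-- total variation minus `t` times the weighted `l1` norm -/
def Jt (t : ℝ) (y : Fin n → ℝ) : ℝ :=
  (∑ i, ∑ j, if G.Adj i j then |y i - y j| else 0) / 2 - t * ∑ i, degR G i * |y i|

def ind (S : Finset (Fin n)) (i : Fin n) : ℝ := if i ∈ S then 1 else 0

lemma Jt_add {t : ℝ} {y a b : Fin n → ℝ}
    (h1 : ∀ i j, G.Adj i j → |y i - y j| = |a i - a j| + |b i - b j|)
    (h2 : ∀ i, |y i| = |a i| + |b i|) : Jt G t y = Jt G t a + Jt G t b := by
  have e1 : (∑ i, ∑ j, if G.Adj i j then |y i - y j| else 0) =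
      (∑ i, ∑ j, if G.Adj i j then |a i - a j| else 0) +
      ∑ i, ∑ j, if G.Adj i j then |b i - b j| else 0 := by
    simp only [← Finset.sum_add_distrib]
    refine Finset.sum_congr rfl fun i _ => Finset.sum_congr rfl fun j _ => ?_
    split_ifs with h
    · exact h1 i j h
    · simp
  have e2 : ∑ i, degR G i * |y i| = ∑ i, degR G i * |a i| + ∑ i, degR G i * |b i| := by
    simp only [← Finset.sum_add_distrib, h2, mul_add]
  unfold Jt
  rw [e1, e2]
  ring

lemma Jt_smul (t : ℝ) {c : ℝ} (hc : 0 ≤ c) (y : Fin n → ℝ) :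
    Jt G t (fun i => c * y i) = c * Jt G t y := by
  unfold Jt
  have e1 : (∑ i, ∑ j, if G.Adj i j then |c * y i - c * y j| else 0) =
      c * ∑ i, ∑ j, if G.Adj i j then |y i - y j| else 0 := by
    simp only [Finset.mul_sum]
    refine Finset.sum_congr rfl fun i _ => Finset.sum_congr rfl fun j _ => ?_
    split_ifs
    · rw [← mul_sub, abs_mul, abs_of_nonneg hc]
    · simp
  have e2 : ∑ i, degR G i * |c * y i| = c * ∑ i, degR G i * |y i| := by
    rw [Finset.mul_sum]
    refine Finset.sum_congr rfl fun i _ => ?_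
    rw [abs_mul, abs_of_nonneg hc]
    ring
  rw [e1, e2]
  ring

lemma Jt_zero (t : ℝ) : Jt G t (fun _ => 0) = 0 := by
  simp [Jt]

lemma exists_conn_neg (t : ℝ) (N : ℕ) : ∀ S : Finset (Fin n), S.card = N → Jt G t (ind S) < 0 →
    ∃ S' ⊆ S, S'.Nonempty ∧ Conn G S' ∧ Jt G t (ind S') < 0 := by
  induction N using Nat.strong_induction_on with
  | _ N ih =>
    intro S hS hneg
    by_cases hc : Conn G S
    · refine ⟨S, subset_rfl, ?_, hc, hneg⟩
      rw [Finset.nonempty_iff_ne_empty]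
      rintro rfl
      have : ind (∅ : Finset (Fin n)) = fun _ => 0 := by funext i; simp [ind]
      rw [this, Jt_zero] at hneg
      exact lt_irrefl _ hneg
    · unfold Conn at hc
      push Not at hc
      obtain ⟨A, hAS, hAne, hneq, hno⟩ := hc
      have hadd : Jt G t (ind S) = Jt G t (ind A) + Jt G t (ind (S \ A)) := by
        apply Jt_add
        · intro i j hij
          have n1 : i ∈ A → j ∈ S → j ∉ A → False := fun a b c => hno i a j b c hij
          have n2 : j ∈ A → i ∈ S → i ∉ A → False := fun a b c => hno j a i b c hij.symm
          have s1 := @hAS i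
          have s2 := @hAS j
          simp only [ind, Finset.mem_sdiff]
          by_cases a1 : i ∈ A <;> by_cases a2 : j ∈ A <;> by_cases a3 : i ∈ S <;>
            by_cases a4 : j ∈ S <;> simp_all
        · intro i
          have s1 := @hAS i
          simp only [ind, Finset.mem_sdiff]
          by_cases a1 : i ∈ A <;> by_cases a3 : i ∈ S <;> simp_all
      have hlt : A.card < S.card := Finset.card_lt_card (hAS.ssubset_of_ne hneq)
      have hlt2 : (S \ A).card < S.card := by
        have := Finset.card_sdiff_add_card_eq_card hAS
        have := hAne.card_pos
        omega
      rcases lt_or_ge (Jt G t (ind A)) 0 with h | h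
      · obtain ⟨S', h1, h2⟩ := ih _ (hS ▸ hlt) A rfl h
        exact ⟨S', h1.trans hAS, h2⟩
      · obtain ⟨S', h1, h2⟩ := ih _ (hS ▸ hlt2) (S \ A) rfl (by linarith)
        exact ⟨S', h1.trans Finset.sdiff_subset, h2⟩

lemma Jt_nonneg_aux {t : ℝ} (T : Finset (Fin n))
    (hT : ∀ S, (∀ v ∈ T, v ∉ S) → 0 ≤ Jt G t (ind S)) (N : ℕ) :
    ∀ y : Fin n → ℝ, (Finset.univ.filter fun i => y i ≠ 0).card = N → (∀ i, 0 ≤ y i) →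
    (∀ v ∈ T, y v = 0) → 0 ≤ Jt G t y := by
  induction N using Nat.strong_induction_on with
  | _ N ih =>
    intro y hN hy hyT
    set S := Finset.univ.filter fun i => y i ≠ 0 with hS
    have hmem : ∀ i, i ∈ S ↔ y i ≠ 0 := by intro i; simp [hS]
    rcases S.eq_empty_or_nonempty with h0 | hne
    · have : y = fun _ => 0 := by
        funext i
        by_contra h
        have := (hmem i).2 h
        rw [h0] at this
        simp at this
      rw [this, Jt_zero]
    · obtain ⟨i0, hi0, hmin⟩ := S.exists_min_image y hne
      have hpos : 0 < y i0 := lt_of_le_of_ne (hy i0) (Ne.symm ((hmem i0).1 hi0))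
      have hz : ∀ i, i ∉ S → y i = 0 := fun i hi => by
        by_contra h; exact hi ((hmem i).2 h)
      have hadd : Jt G t y = Jt G t (fun i => y i0 * ind S i) +
          Jt G t (fun i => y i - y i0 * ind S i) := by
        apply Jt_add
        · intro i j _
          simp only [ind]
          by_cases a1 : i ∈ S <;> by_cases a2 : j ∈ S <;> simp only [a1, a2, if_true, if_false]
          · simp
          · have := hmin i a1
            rw [hz j a2]
            simp only [mul_one, mul_zero, sub_zero]
            rw [abs_of_nonneg (hy i), abs_of_pos hpos, abs_of_nonneg (by linarith)]
            ring
          · have := hmin j a2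
            rw [hz i a1]
            simp only [mul_one, mul_zero, sub_zero, zero_sub, abs_neg]
            rw [abs_of_nonneg (hy j), abs_of_pos hpos, abs_of_nonneg (by linarith)]
            ring
          · rw [hz i a1, hz j a2]; simp
        · intro i
          simp only [ind]
          by_cases a1 : i ∈ S <;> simp only [a1, if_true, if_false]
          · have := hmin i a1
            simp only [mul_one]
            rw [abs_of_nonneg (hy i), abs_of_pos hpos, abs_of_nonneg (by linarith)]
            ring
          · rw [hz i a1]; simp
      rw [hadd, Jt_smul G t hpos.le]
      have hTS : ∀ v ∈ T, v ∉ S := fun v hv hvS => (hmem v).1 hvS (hyT v hv)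
      refine add_nonneg (mul_nonneg hpos.le (hT S hTS)) ?_
      refine ih _ ?_ _ rfl ?_ ?_
      · rw [← hN]
        apply Finset.card_lt_card
        rw [Finset.ssubset_iff_of_subset]
        · refine ⟨i0, hi0, ?_⟩
          simp [ind, hi0]
        · intro i hi
          by_contra hiS
          simp [ind, hiS, hz i hiS] at hi
      · intro i
        by_cases a1 : i ∈ S
        · have := hmin i a1
          simp only [ind, a1, if_true]; linarith
        · simp [ind, a1, hz i a1]
      · intro v hv
        simp [ind, hTS v hv, hyT v hv]

lemma Jt_nonneg {t : ℝ} (T : Finset (Fin n))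
    (hT : ∀ S, (∀ v ∈ T, v ∉ S) → 0 ≤ Jt G t (ind S)) (y : Fin n → ℝ)
    (hy : ∀ v ∈ T, y v = 0) : 0 ≤ Jt G t y := by
  have hadd : Jt G t y = Jt G t (fun i => max (y i) 0) + Jt G t (fun i => max (-y i) 0) := by
    apply Jt_add
    · intro i j _
      rcases le_total 0 (y i) with a | a <;> rcases le_total 0 (y j) with b | b <;>
        simp only [a, b, max_eq_left, max_eq_right, neg_nonneg, neg_nonpos]
      · simp
      · rw [abs_of_nonneg (by linarith), abs_of_nonneg (by linarith), abs_of_nonpos (by linarith)]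
        ring
      · rw [abs_of_nonpos (by linarith), abs_of_nonpos (by linarith), abs_of_nonneg (by linarith)]
        ring
      · rw [sub_zero, abs_zero, zero_add, ← abs_neg]; congr 1; ring
    · intro i
      rcases le_total 0 (y i) with a | a <;>
        simp [a]
  rw [hadd]
  refine add_nonneg (Jt_nonneg_aux G T hT _ _ rfl (fun i => le_max_right _ _) ?_)
    (Jt_nonneg_aux G T hT _ _ rfl (fun i => le_max_right _ _) ?_)
  · intro v hv; simp [hy v hv]
  · intro v hv; simp [hy v hv]

variable (C : Fin n → Bool)

def eps (i : Fin n) : ℝ := if C i then 1 else -1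

lemma abs_eps_mul (i : Fin n) (a : ℝ) : |eps C i * a| = |a| := by
  unfold eps; split_ifs <;> simp

lemma eps_eps (i : Fin n) (a : ℝ) : eps C i * (eps C i * a) = a := by
  unfold eps; split_ifs <;> simp

variable {C}

lemma Jt_eq (hC : ∀ i j, G.Adj i j → C i ≠ C j) (t : ℝ) (x : Fin n → ℝ) :
    Jt G t (fun i => eps C i * x i) = IplusU G x - t * ∑ i, degR G i * |x i| := by
  unfold Jt IplusU
  simp only [abs_eps_mul]
  congr 2
  refine Finset.sum_congr rfl fun i _ => Finset.sum_congr rfl fun j _ => ?_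
  split_ifs with h
  · have := hC i j h
    unfold eps
    cases hi : C i <;> cases hj : C j <;> simp_all
    rw [← abs_neg]; congr 1; ring
  · rfl

lemma Jt_ind (hC : ∀ i j, G.Adj i j → C i ≠ C j) (t : ℝ) (S : Finset (Fin n)) :
    Jt G t (ind S) = volF G S
      - 2 * cutE G (S.filter fun i => C i = true) (S.filter fun i => ¬ C i = true) - t * volF G S := by
  have e : ind S = fun i => eps C i *
      sg (S.filter fun i => C i = true) (S.filter fun i => ¬ C i = true) i := by
    funext i
    unfold ind eps sg
    by_cases h1 : i ∈ S <;> cases h2 : C i <;> simp [h1, h2]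
  rw [e, Jt_eq G hC, Iplus_sg G (Finset.disjoint_filter_filter_not _ _ _), den_sg,
    Finset.filter_union_filter_not_eq]

lemma lower_A (hforest : G.IsAcyclic) (hiso : ∀ i, 0 < G.degree i) {k : ℕ} (hk : 1 ≤ k)
    (A : Set (Fin n → ℝ)) (h0 : (0 : Fin n → ℝ) ∉ A) (hA : GenusGe A k) :
    1 - dualCheeger G k ≤ sSup (RayleighPlus G '' A) := by
  classical
  obtain ⟨C, hC⟩ : ∃ C : Fin n → Bool, ∀ i j, G.Adj i j → C i ≠ C j := by
    obtain ⟨c⟩ := hforest.colorable_two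
    refine ⟨fun i => decide (c i = 0), fun i j hij h => ?_⟩
    have := c.valid hij
    simp only [decide_eq_decide] at h
    omega
  set h := dualCheeger G k with hh
  have hkne : Nonempty (Fin k) := ⟨⟨0, hk⟩⟩
  rcases pierce hforest n Finset.univ (by simp)
    (fun S => S.Nonempty ∧ Conn G S ∧ Jt G (1 - h) (ind S) < 0) k
    (fun S hS => ⟨hS.1, Finset.subset_univ _, hS.2.1⟩) with ⟨f, hf, hd⟩ | ⟨T, hT, hhit⟩
  · exfalso
    let P : Fin k → Finset (Fin n) := fun i => (f i).filter fun v => C v = true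
    let Q : Fin k → Finset (Fin n) := fun i => (f i).filter fun v => ¬ C v = true
    have hPQ : ∀ i, P i ∪ Q i = f i := fun i => Finset.filter_union_filter_not_eq _ _
    have hle : (⨅ i, 2 * cutE G (P i) (Q i) / volF G (P i ∪ Q i)) ≤ h := by
      apply le_csSup
      · refine ⟨1, ?_⟩
        rintro _ ⟨P, Q, h1, h2, h3, rfl⟩
        refine (ciInf_le (Set.finite_range _).bddBelow (⟨0, hk⟩ : Fin k)).trans ?_
        rw [div_le_one (volF_pos G hiso (h3 _))]
        have := Iplus_sg G (h1 ⟨0, hk⟩)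
        have := IplusU_nonneg G (sg (P ⟨0, hk⟩) (Q ⟨0, hk⟩))
        linarith
      · refine ⟨P, Q, fun i => Finset.disjoint_filter_filter_not _ _ _, ?_, ?_, rfl⟩
        · intro i j hij; rw [hPQ, hPQ]; exact hd i j hij
        · intro i; rw [hPQ]; exact (hf i).1
    obtain ⟨i, hi⟩ := exists_eq_ciInf_of_finite
      (f := fun i => 2 * cutE G (P i) (Q i) / volF G (P i ∪ Q i))
    rw [← hi] at hle
    simp only [hPQ] at hle
    rw [div_le_iff₀ (volF_pos G hiso (hf i).1)] at hle
    have := (hf i).2.2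
    rw [Jt_ind G hC] at this
    simp only [P, Q] at hle
    linarith
  · have hex : ∃ x ∈ A, ∀ v ∈ T, x v = 0 := by
      by_contra hcon
      push Not at hcon
      have : HasOddMap A T.card := by
        refine ⟨fun x j => x (T.equivFin.symm j), ?_, ?_, ?_⟩
        · apply Continuous.continuousOn
          fun_prop
        · intro x _; rfl
        · intro x hx h0
          obtain ⟨v, hv, hne⟩ := hcon x hx
          apply hne
          have := congrFun h0 (T.equivFin ⟨v, hv⟩)
          simpa using this
      have := hA _ this
      omega
    obtain ⟨x, hx, hxT⟩ := hex
    have hJ : 0 ≤ Jt G (1 - h) (fun i => eps C i * x i) := by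
      refine Jt_nonneg G T ?_ _ (fun v hv => by rw [hxT v hv, mul_zero])
      intro S hS
      by_contra hneg
      push Not at hneg
      obtain ⟨S', h1, h2⟩ := exists_conn_neg G (1 - h) _ S rfl hneg
      obtain ⟨v, hv, hvS⟩ := hhit S' h2
      exact hS v hv (h1 hvS)
    rw [Jt_eq G hC] at hJ
    have hx0 : x ≠ 0 := by rintro rfl; exact h0 hx
    have hden : 0 < ∑ i, degR G i * |x i| := by
      obtain ⟨i, hi⟩ := Function.ne_iff.1 hx0
      have hdp : ∀ i, 0 < degR G i := fun i => by unfold degR; exact_mod_cast hiso i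
      exact Finset.sum_pos' (fun j _ => mul_nonneg (hdp j).le (abs_nonneg _))
        ⟨i, Finset.mem_univ _, mul_pos (hdp i) (abs_pos.2 hi)⟩
    have hR : 1 - h ≤ RayleighPlus G x := by
      unfold RayleighPlus
      rw [le_div_iff₀ hden]
      linarith
    refine hR.trans (le_csSup ⟨1, ?_⟩ ⟨x, hx, rfl⟩)
    rintro _ ⟨z, _, rfl⟩
    exact Ray_le_one G z

end lower

theorem stmt10 (G : SimpleGraph (Fin n)) [DecidableRel G.Adj]
    (hforest : G.IsAcyclic) (hiso : ∀ i, 0 < G.degree i) :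
    ∀ k : ℕ, 1 ≤ k → k ≤ n → ckSignless G k = 1 - dualCheeger G k := by
  intro k hk hkn
  have hadm : ∃ P Q : Fin k → Finset (Fin n),
    (∀ i, Disjoint (P i) (Q i)) ∧
    (∀ i j, i ≠ j → Disjoint (P i ∪ Q i) (P j ∪ Q j)) ∧
    (∀ i, (P i ∪ Q i).Nonempty) := by
    refine ⟨fun i => {Fin.castLE hkn i}, fun _ => ∅, by simp, ?_, by simp⟩
    intro i j hij
    simpa using hij
  have hup : ∀ P Q : Fin k → Finset (Fin n), (∀ i, Disjoint (P i) (Q i)) →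
      (∀ i j, i ≠ j → Disjoint (P i ∪ Q i) (P j ∪ Q j)) → (∀ i, (P i ∪ Q i).Nonempty) →
      ckSignless G k ≤ 1 - ⨅ i, 2 * cutE G (P i) (Q i) / volF G (P i ∪ Q i) := by
    intro P Q h1 h2 h3
    obtain ⟨A, a1, a2, a3, a4, a5⟩ := upper_A G hiso hk h1 h2 h3
    refine le_trans (csInf_le ⟨0, ?_⟩ ⟨A, a1, a2, a3, a4, rfl⟩) a5
    rintro _ ⟨B, _, _, _, _, rfl⟩
    apply Real.sSup_nonneg
    rintro _ ⟨x, _, rfl⟩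
    exact Ray_nonneg G x
  obtain ⟨P, Q, h1, h2, h3⟩ := hadm
  apply le_antisymm
  · have : dualCheeger G k ≤ 1 - ckSignless G k := by
      refine csSup_le (a := 1 - ckSignless G k) ⟨_, P, Q, h1, h2, h3, rfl⟩ ?_
      rintro _ ⟨P, Q, h1, h2, h3, rfl⟩
      have := hup P Q h1 h2 h3
      linarith
    linarith
  · obtain ⟨A, a1, a2, a3, a4, a5⟩ := upper_A G hiso hk h1 h2 h3
    refine le_csInf (a := 1 - dualCheeger G k) ⟨_, A, a1, a2, a3, a4, rfl⟩ ?_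
    rintro _ ⟨B, _, _, b3, b4, rfl⟩
    exact lower_A G hforest hiso hk B b3 b4
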